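/- For every ε > 0 and every r ∈ (1,2) there are constants C > 0 and C' > 0 such that for every integer y ≥ 1 there is N₀ = N_{r,y} with: for all integers N > N₀, all b with gcd(b,y) = 1, every real Q with 1 ≤ Q < (log N)^{C' r'} (where r' = r/(r−1)), and every finite set F ⊂ [0,N] ∩ ℤ, one has ‖ Lo_{N,y,Q} ∗ 1_F ‖_{ℓ^∞(ℤ)} ≤ C · Q^ε · (y/N)^{1/r} · |F|^{1/r}. -/

import Mathlib

open scoped ENNReal

noncomputable section

/-- `e(t) = e^{2πit}`. -/
def e2pi (t : ℝ) : ℂ := Complex.exp (2 * Real.pi * Complex.I * t)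

/-- For real `x > 0`, `M̂_x(θ) = (1/x) Σ_{0 ≤ n < x} e(-nθ)`. -/
def Mhat (x θ : ℝ) : ℂ :=
  ((1 / x : ℝ) : ℂ) * ∑ n ∈ Finset.range ⌈x⌉₊, e2pi (-(n * θ))

/-- The Gauss-type sum `Υ(a,q)`. -/
def Ups (y : ℕ) (b : ℤ) (a : ℤ) (q : ℕ) : ℂ :=
  ((Nat.totient y : ℂ) / (Nat.totient (Nat.lcm y q) : ℂ)) *
    ∑ r ∈ (Finset.Icc 1 q).filter
        (fun r : ℕ => Nat.gcd r q = 1 ∧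
          (r : ℤ) % (Nat.gcd y q : ℤ) = b % (Nat.gcd y q : ℤ)),
      e2pi (-((((r : ℤ) * a : ℤ) : ℝ) / (q : ℝ)))

/-- The Ramanujan height `h_y(q)` of `q` relative to `y`. -/
def hgt (y q : ℕ) : ℕ :=
  if 1 < Nat.gcd y q ∧ Nat.gcd y q < q ∧ 1 < Nat.gcd (Nat.gcd y q) (q / Nat.gcd y q) then 0
  else Nat.lcm y q / y

/-- The multiplier piece `L̂^{a,q}_{N,y}(ξ) = Υ(a,q) M̂_{N/ℓ}(ℓ(ξ-a/q)) χ(ℓ²(ξ-a/q))`. -/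
def Lhat (χ : ℝ → ℝ) (y : ℕ) (b : ℤ) (N : ℝ) (a q : ℕ) (ξ : ℝ) : ℂ :=
  Ups y b (a : ℤ) q *
    Mhat (N / (Nat.lcm y q : ℝ)) ((Nat.lcm y q : ℝ) * (ξ - (a : ℝ) / (q : ℝ))) *
    ((χ ((Nat.lcm y q : ℝ) ^ 2 * (ξ - (a : ℝ) / (q : ℝ))) : ℝ) : ℂ)

/-- The kernel `L^{a,q}_{N,y}(x) = ∫₀¹ L̂^{a,q}_{N,y}(ξ) e(xξ) dξ`. -/
def Lker (χ : ℝ → ℝ) (y : ℕ) (b : ℤ) (N : ℝ) (a q : ℕ) (x : ℤ) : ℂ :=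
  ∫ ξ in (0:ℝ)..1, Lhat χ y b N a q ξ * e2pi ((x : ℝ) * ξ)


/-- The Low kernel `Lo_{N,y,Q} = Σ_{q : h_y(q) < Q} Σ_{a ∈ A_q} L^{a,q}_{N,y}`
(a finite sum, since `h_y(q) < Q` forces `q ≤ yQ`). -/
def LoK (χ : ℝ → ℝ) (y : ℕ) (b : ℤ) (N : ℕ) (Q : ℝ) (x : ℤ) : ℂ :=
  ∑ q ∈ (Finset.Icc 1 (y * ⌈Q⌉₊)).filter (fun q : ℕ => (hgt y q : ℝ) < Q),
    ∑ a ∈ (Finset.Icc 1 q).filter (fun a : ℕ => Nat.gcd a q = 1),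
      Lker χ y b (N : ℝ) a q x

/-- `(Lo_{N,y,Q} ∗ 1_F)(x)`. -/
def LoConv (χ : ℝ → ℝ) (y : ℕ) (b : ℤ) (N : ℕ) (Q : ℝ) (F : Finset ℤ) (x : ℤ) : ℂ :=
  ∑ z ∈ F, LoK χ y b N Q (x - z)

/-!
Since `Υ(a, q)` vanishes unless `h = h_y(q)` is coprime to `y`, the Chinese remainder theorem sums
the arcs of height `h` to `y 1_{y ∣ x - b} μ(h) c_h(x) / φ(h)` times a kernel of size `O(1 / N)`,
where `c_h` is Ramanujan's sum. As `|c_h(x)|` is at most the sum of the common divisors of `h` and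
`x`, it remains to bound the number of divisors of `x - z` below `Q`, on average over the `z ∈ F`
with `y ∣ x - z - b`. On a full progression all moments of this number are `O(Q^ε)` as soon as `N`
exceeds a power of `Q`, and Hölder's inequality passes from the progression to `F`. The arc of
`q = 1` is special: `∫₀¹` cuts it in half, and the missing half is estimated by Hölder's inequality
on the circle together with Parseval's identity.
-/

/-! ### The exponential `e(t)` -/

lemma e2pi_add (s t : ℝ) : e2pi (s + t) = e2pi s * e2pi t := by
  simp only [e2pi, ← Complex.exp_add]
  push_cast
  ring_nf

lemma e2pi_nat_mul (n : ℕ) (t : ℝ) : e2pi (n * t) = e2pi t ^ n := by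
  rw [e2pi, e2pi, ← Complex.exp_nat_mul]
  push_cast
  ring_nf

lemma e2pi_eq_one_iff {t : ℝ} : e2pi t = 1 ↔ ∃ n : ℤ, t = n := by
  rw [e2pi, Complex.exp_eq_one_iff]
  refine exists_congr fun n => ?_
  rw [mul_comm (n : ℂ), mul_right_inj' Complex.two_pi_I_ne_zero]
  norm_cast

lemma e2pi_intCast (n : ℤ) : e2pi n = 1 := e2pi_eq_one_iff.2 ⟨n, rfl⟩

lemma e2pi_zero : e2pi 0 = 1 := by simpa using e2pi_intCast 0

lemma e2pi_intCast_div_eq_one_iff {n : ℕ} (hn : n ≠ 0) (k : ℤ) :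
    e2pi (k / n) = 1 ↔ (n : ℤ) ∣ k := by
  have hn' : (n : ℝ) ≠ 0 := by exact_mod_cast hn
  simp only [e2pi_eq_one_iff, div_eq_iff hn', Dvd.dvd, mul_comm (n : ℤ)]
  norm_cast

lemma e2pi_eq_of_sub_eq_intCast {s t : ℝ} (n : ℤ) (h : s - t = n) : e2pi s = e2pi t := by
  rw [← sub_add_cancel s t, h, e2pi_add, e2pi_intCast, one_mul]

lemma norm_e2pi (t : ℝ) : ‖e2pi t‖ = 1 := by
  rw [e2pi, show (2 * Real.pi * Complex.I * t : ℂ) = ((2 * Real.pi * t : ℝ) : ℂ) * Complex.I by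
    push_cast; ring, Complex.norm_exp_ofReal_mul_I]

@[fun_prop]
lemma continuous_e2pi : Continuous e2pi := by
  unfold e2pi
  fun_prop

/-! ### Sums over a period -/

section Periodic

open Function

lemma sum_Ico_eq_sum_range_of_periodic {M : Type*} [AddCommMonoid M] {F : ℕ → M} {q : ℕ}
    (hF : Periodic F q) (m : ℕ) :
    ∑ n ∈ Finset.Ico m (m + q), F n = ∑ n ∈ Finset.range q, F n := by
  rw [← Nat.image_Ico_mod m q, Finset.sum_image (Nat.mod_injOn_Ico m q)]
  exact Finset.sum_congr rfl fun n _ => (hF.map_mod_nat n).symm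

lemma sum_Icc_eq_sum_range_of_periodic {M : Type*} [AddCommMonoid M] {F : ℕ → M} {q : ℕ}
    (hF : Periodic F q) :
    ∑ n ∈ Finset.Icc 1 q, F n = ∑ n ∈ Finset.range q, F n := by
  rw [← sum_Ico_eq_sum_range_of_periodic hF 1, add_comm 1 q, Finset.Ico_add_one_right_eq_Icc]

lemma sum_range_eq_zero_of_shift {R : Type*} [Ring R] [NoZeroDivisors R] {F : ℕ → R} {q c : ℕ}
    {ζ : R} (hF : Periodic F q) (hshift : ∀ n, F (n + c) = F n * ζ) (hζ : ζ ≠ 1) :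
    ∑ n ∈ Finset.range q, F n = 0 := by
  have hsum : (∑ n ∈ Finset.range q, F n) * ζ = ∑ n ∈ Finset.range q, F n := calc
    _ = ∑ n ∈ Finset.range q, F (n + c) := by simp only [hshift, Finset.sum_mul]
    _ = ∑ n ∈ Finset.Ico c (c + q), F n := by
      rw [Finset.range_eq_Ico, Finset.sum_Ico_add' F 0 q c, zero_add, add_comm]
    _ = _ := sum_Ico_eq_sum_range_of_periodic hF c
  rw [← sub_eq_zero, ← mul_sub_one] at hsum
  exact (mul_eq_zero.1 hsum).resolve_right (sub_ne_zero.2 hζ)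

end Periodic

/-! ### Ramanujan sums -/

/-- The reduced residue system `{1 ≤ a ≤ n : gcd(a, n) = 1}`, over which numerators of arcs and
Ramanujan sums run. The representative of `0` is `n`, so `coprimeResidues 1 = {1}`. -/
def coprimeResidues (n : ℕ) : Finset ℕ :=
  (Finset.Icc 1 n).filter fun a => Nat.gcd a n = 1

lemma mem_coprimeResidues {a n : ℕ} : a ∈ coprimeResidues n ↔ a ∈ Finset.Icc 1 n ∧ a.Coprime n :=
  Finset.mem_filter

/-- The Ramanujan sum `c_n(x) = ∑_{a mod n, (a, n) = 1} e(ax/n)`. -/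
def ramanujanSum (n : ℕ) (x : ℤ) : ℂ :=
  ∑ a ∈ coprimeResidues n, e2pi ((a * x : ℤ) / n)

lemma ramanujanSum_congr {n : ℕ} {x x' : ℤ} (h : x ≡ x' [ZMOD n]) :
    ramanujanSum n x = ramanujanSum n x' := by
  obtain ⟨k, hk⟩ := h.symm.dvd
  rcases Nat.eq_zero_or_pos n with rfl | hn
  · simp [ramanujanSum, coprimeResidues]
  refine Finset.sum_congr rfl fun a _ => e2pi_eq_of_sub_eq_intCast (a * k) ?_
  rw [← sub_div, ← Int.cast_sub, ← mul_sub, hk]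
  push_cast
  field_simp

lemma sum_e2pi_Icc {n : ℕ} (hn : 0 < n) (x : ℤ) :
    ∑ a ∈ Finset.Icc 1 n, e2pi ((a * x : ℤ) / n) = if (n : ℤ) ∣ x then (n : ℂ) else 0 := by
  have hpow (a : ℕ) : e2pi ((a * x : ℤ) / n) = e2pi (x / n) ^ a := by
    rw [← e2pi_nat_mul]; congr 1; push_cast; ring
  have hpow_n : e2pi (x / n) ^ n = 1 := by
    rw [← e2pi_nat_mul, mul_div_cancel₀ _ (by positivity), e2pi_intCast]
  simp only [hpow]
  rw [sum_Icc_eq_sum_range_of_periodic fun a => by rw [pow_add, hpow_n, mul_one]]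
  split_ifs with h
  · simp [(e2pi_intCast_div_eq_one_iff hn.ne' x).2 h]
  · rw [geom_sum_eq (mt (e2pi_intCast_div_eq_one_iff hn.ne' x).1 h), hpow_n, sub_self, zero_div]

lemma sum_filter_gcd_eq {M : Type*} [AddCommMonoid M] {d m : ℕ} (hd : 0 < d) (f : ℕ → M) :
    ∑ a ∈ Finset.Icc 1 (d * m) with Nat.gcd a (d * m) = d, f a =
      ∑ a ∈ coprimeResidues m, f (d * a) := by
  have hgcd (a : ℕ) : Nat.gcd (d * a) (d * m) = d ↔ a.Coprime m := by
    rw [Nat.gcd_mul_left, Nat.mul_eq_left hd.ne', Nat.coprime_iff_gcd_eq_one]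
  have hIcc (a : ℕ) : d * a ∈ Finset.Icc 1 (d * m) ↔ a ∈ Finset.Icc 1 m := by
    simp [Nat.succ_le_iff, hd]
  rw [← Finset.sum_image (g := fun a => d * a) fun a _ b _ h => Nat.eq_of_mul_eq_mul_left hd h]
  refine Finset.sum_congr ?_ fun _ _ => rfl
  ext a
  simp only [Finset.mem_filter, Finset.mem_image, mem_coprimeResidues]
  constructor
  · rintro ⟨ha, hgcd_a⟩
    obtain ⟨c, rfl⟩ : d ∣ a := hgcd_a ▸ Nat.gcd_dvd_left a (d * m)
    exact ⟨c, ⟨(hIcc c).1 ha, (hgcd c).1 hgcd_a⟩, rfl⟩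
  · rintro ⟨c, ⟨hc, hcm⟩, rfl⟩
    exact ⟨(hIcc c).2 hc, (hgcd c).2 hcm⟩

lemma sum_divisors_ramanujanSum {n : ℕ} (hn : 0 < n) (x : ℤ) :
    ∑ d ∈ n.divisors, ramanujanSum d x = if (n : ℤ) ∣ x then (n : ℂ) else 0 := by
  rw [← sum_e2pi_Icc hn x, ← Nat.sum_div_divisors n (fun d => ramanujanSum d x),
    ← Finset.sum_fiberwise_of_maps_to (s := Finset.Icc 1 n) (t := n.divisors)
      (g := fun a => Nat.gcd a n) fun a _ => Nat.mem_divisors.2 ⟨Nat.gcd_dvd_right _ _, hn.ne'⟩]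
  refine Finset.sum_congr rfl fun d hd => ?_
  obtain ⟨m, rfl⟩ := Nat.dvd_of_mem_divisors hd
  have hd0 : 0 < d := Nat.pos_of_mul_pos_right hn
  rw [Nat.mul_div_cancel_left m hd0, ramanujanSum, sum_filter_gcd_eq hd0]
  refine Finset.sum_congr rfl fun a _ => ?_
  congr 1
  push_cast
  field_simp

open ArithmeticFunction in
lemma ramanujanSum_eq {n : ℕ} (hn : 0 < n) (x : ℤ) :
    ramanujanSum n x = ∑ p ∈ n.divisorsAntidiagonal,
      (moebius p.1 : ℂ) * if (p.2 : ℤ) ∣ x then (p.2 : ℂ) else 0 :=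
  ((sum_eq_iff_sum_mul_moebius_eq (f := fun n => ramanujanSum n x)
    (g := fun n => if (n : ℤ) ∣ x then (n : ℂ) else 0)).1
      (fun _ hm => sum_divisors_ramanujanSum hm x) n hn).symm

lemma norm_ramanujanSum_le {n : ℕ} (hn : 0 < n) (x : ℤ) :
    ‖ramanujanSum n x‖ ≤ ∑ d ∈ n.divisors.filter (fun d : ℕ => (d : ℤ) ∣ x), (d : ℝ) := by
  rw [ramanujanSum_eq hn, Finset.sum_filter,
    ← Nat.sum_divisorsAntidiagonal' (f := fun _ d => if (d : ℤ) ∣ x then (d : ℝ) else 0)]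
  refine (norm_sum_le _ _).trans (Finset.sum_le_sum fun p _ => ?_)
  have hmoebius : ‖(ArithmeticFunction.moebius p.1 : ℂ)‖ ≤ 1 := by
    rw [Complex.norm_intCast]
    exact_mod_cast ArithmeticFunction.abs_moebius_le_one
  rw [norm_mul]
  split_ifs
  · simpa using mul_le_mul_of_nonneg_right hmoebius (Nat.cast_nonneg p.2)
  · simp

lemma ramanujanSum_of_isCoprime {n : ℕ} (hn : 0 < n) {x : ℤ} (hx : IsCoprime (n : ℤ) x) :
    ramanujanSum n x = ArithmeticFunction.moebius n := by
  rw [ramanujanSum_eq hn, Finset.sum_eq_single (n, 1)]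
  · simp
  · rintro ⟨i, j⟩ hp hne
    obtain ⟨rfl, -⟩ := Nat.mem_divisorsAntidiagonal.1 hp
    rw [if_neg, mul_zero]
    intro hj
    have hj_unit : IsUnit (j : ℤ) :=
      hx.isUnit_of_dvd' (Int.natCast_dvd_natCast.2 (dvd_mul_left j i)) hj
    obtain rfl : j = 1 := by simpa using Int.ofNat_isUnit.1 hj_unit
    exact hne (by simp)
  · exact fun h => absurd (Nat.mem_divisorsAntidiagonal.2 ⟨mul_one n, hn.ne'⟩) h

open ArithmeticFunction in
lemma ramanujanSum_mul {m n : ℕ} (hm : 0 < m) (hn : 0 < n) (hmn : m.Coprime n) (x : ℤ) :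
    ramanujanSum (m * n) x = ramanujanSum m x * ramanujanSum n x := by
  let G : ArithmeticFunction ℂ := ⟨fun n => if (n : ℤ) ∣ x then (n : ℂ) else 0, by simp⟩
  have hG : G.IsMultiplicative := by
    refine ⟨by simp [G], fun {a b} hab => ?_⟩
    have hdvd : ((a * b : ℕ) : ℤ) ∣ x ↔ (a : ℤ) ∣ x ∧ (b : ℤ) ∣ x := by
      push_cast
      exact ⟨fun h => ⟨dvd_of_mul_right_dvd h, dvd_of_mul_left_dvd h⟩,
        fun h => (Nat.isCoprime_iff_coprime.2 hab).mul_dvd h.1 h.2⟩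
    simp only [G, coe_mk, hdvd]
    by_cases ha : (a : ℤ) ∣ x <;> by_cases hb : (b : ℤ) ∣ x <;> simp [ha, hb]
  have hconv : ∀ k : ℕ, 0 < k → ramanujanSum k x =
      ((moebius : ArithmeticFunction ℤ) * G : ArithmeticFunction ℂ) k := fun k hk => by
    rw [ramanujanSum_eq hk, ArithmeticFunction.mul_apply]
    rfl
  rw [hconv _ (Nat.mul_pos hm hn), hconv _ hm, hconv _ hn,
    (isMultiplicative_moebius.intCast.mul hG).map_mul_of_coprime hmn]

lemma sum_ramanujanSum_sub {h : ℕ} (hh : 0 < h) (x : ℤ) :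
    ∑ s ∈ coprimeResidues h, ramanujanSum h (x - s) =
      ArithmeticFunction.moebius h * ramanujanSum h x := by
  simp only [ramanujanSum]
  rw [Finset.sum_comm, Finset.mul_sum]
  refine Finset.sum_congr rfl fun a ha => ?_
  have hcop : IsCoprime (h : ℤ) (-a) :=
    (Nat.isCoprime_iff_coprime.2 (mem_coprimeResidues.1 ha).2).symm.neg_right
  rw [← ramanujanSum_of_isCoprime hh hcop, ramanujanSum, Finset.sum_mul]
  refine Finset.sum_congr rfl fun s _ => ?_
  rw [← e2pi_add]
  congr 1
  push_cast
  ring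

/-! ### The coefficients `Υ(a, q)` -/

lemma Ups_eq (y : ℕ) (b a : ℤ) (q : ℕ) :
    Ups y b a q = (Nat.totient y : ℂ) / (Nat.totient (Nat.lcm y q) : ℂ) *
      ∑ r ∈ (coprimeResidues q).filter (fun r : ℕ => r ≡ b [ZMOD Nat.gcd y q]),
        e2pi (-(((r * a : ℤ) : ℝ) / q)) := by
  rw [coprimeResidues, Finset.filter_filter]
  rfl

lemma coprime_mul_iff_of_dvd {p c : ℕ} (hpc : p ∣ c) (r : ℕ) :
    r.Coprime (p * c) ↔ r.Coprime c := by
  rw [Nat.coprime_mul_iff_right]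
  exact ⟨fun h => h.2, fun h => ⟨h.coprime_dvd_right hpc, h⟩⟩

lemma exists_prime_eq_mul_of_not_coprime_div {g q : ℕ} (hgq : g ∣ q)
    (h : ¬ g.Coprime (q / g)) : ∃ p c, p.Prime ∧ q = p * c ∧ g ∣ c ∧ p ∣ c := by
  obtain ⟨p, hp, hpg, m, hm⟩ := Nat.Prime.not_coprime_iff_dvd.1 h
  refine ⟨p, g * m, hp, ?_, dvd_mul_right g m, hpg.mul_right m⟩
  rw [← Nat.mul_div_cancel' hgq, hm]
  ring

/- If a prime `p` divides both `gcd(y, q)` and `q / gcd(y, q)`, the shift `r ↦ r + q / p` preserves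
the summation range and multiplies the summand by `e(-a/p) ≠ 1`. -/
lemma Ups_eq_zero {y q : ℕ} (hq : 0 < q) (b : ℤ)
    (hbad : ¬ (Nat.gcd y q).Coprime (q / Nat.gcd y q)) {a : ℤ} (ha : IsCoprime a q) :
    Ups y b a q = 0 := by
  obtain ⟨p, c, hp, hq_eq, hgc, hpc⟩ :=
    exists_prime_eq_mul_of_not_coprime_div (Nat.gcd_dvd_right y q) hbad
  rw [Ups_eq]
  generalize Nat.gcd y q = g at hgc
  subst hq_eq
  have hp0 : (p : ℝ) ≠ 0 := by exact_mod_cast hp.ne_zero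
  have hc0 : (c : ℝ) ≠ 0 := by exact_mod_cast (Nat.pos_of_mul_pos_left hq).ne'
  let F : ℕ → ℂ := fun r =>
    if r.Coprime (p * c) ∧ r ≡ b [ZMOD g] then e2pi (-(((r * a : ℤ) : ℝ) / (p * c : ℕ))) else 0
  have hshift (t r : ℕ) : F (r + c * t) = F r * e2pi ((-(a * t) : ℤ) / p) := by
    have hmod : ((r + c * t : ℕ) : ℤ) ≡ b [ZMOD g] ↔ r ≡ b [ZMOD g] := by
      obtain ⟨s, rfl⟩ := hgc
      simp [Int.ModEq, mul_assoc]
    have hphase : e2pi (-((((r + c * t : ℕ) * a : ℤ) : ℝ) / (p * c : ℕ))) =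
        e2pi (-(((r * a : ℤ) : ℝ) / (p * c : ℕ))) * e2pi ((-(a * t) : ℤ) / p) := by
      rw [← e2pi_add]
      congr 1
      push_cast
      field_simp
      ring
    simp only [F, hmod, coprime_mul_iff_of_dvd hpc, Nat.coprime_add_mul_left_left, hphase, ite_mul,
      zero_mul]
  have hperiodic : Function.Periodic F (p * c) := fun r => by
    rw [mul_comm p c, hshift, (e2pi_intCast_div_eq_one_iff hp.ne_zero _).2
      (dvd_neg.2 (dvd_mul_left _ a)), mul_one]
  have hphase_ne : e2pi ((-(a * (1 : ℕ)) : ℤ) / p) ≠ 1 := by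
    rw [Ne, e2pi_intCast_div_eq_one_iff hp.ne_zero, dvd_neg, Nat.cast_one, mul_one]
    intro hpa
    exact (Nat.prime_iff_prime_int.1 hp).not_isUnit
      (ha.isUnit_of_dvd' hpa (by push_cast; exact dvd_mul_right _ _))
  rw [coprimeResidues, Finset.filter_filter, Finset.sum_filter,
    sum_Icc_eq_sum_range_of_periodic hperiodic,
    sum_range_eq_zero_of_shift (c := c) hperiodic (fun r => by simpa using hshift 1 r) hphase_ne,
    mul_zero]

lemma exists_mem_Icc_modEq {n : ℕ} (hn : 0 < n) (k : ℤ) :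
    ∃ r ∈ Finset.Icc 1 n, (r : ℤ) ≡ k [ZMOD n] := by
  have hmod_nonneg := Int.emod_nonneg (k - 1) (b := n) (by omega)
  have hmod_lt := Int.emod_lt_of_pos (k - 1) (b := n) (by omega)
  refine ⟨((k - 1) % n + 1).toNat, ?_, ?_⟩
  · rw [Finset.mem_Icc]; omega
  · rw [Int.toNat_of_nonneg (by omega)]
    simpa using (Int.mod_modEq (k - 1) n).add_right 1

lemma eq_of_mem_Icc_of_modEq {n r s : ℕ} (hr : r ∈ Finset.Icc 1 n) (hs : s ∈ Finset.Icc 1 n)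
    (h : (r : ℤ) ≡ s [ZMOD n]) : r = s := by
  rw [Finset.mem_Icc] at hr hs
  have := Int.eq_zero_of_abs_lt_dvd h.dvd (by rw [abs_lt]; constructor <;> omega)
  omega

lemma isCoprime_iff_of_modEq {r s n : ℤ} (h : r ≡ s [ZMOD n]) :
    IsCoprime r n ↔ IsCoprime s n := by
  obtain ⟨k, hk⟩ := h.dvd
  rw [← sub_add_cancel s r, hk, add_comm, IsCoprime.add_mul_left_left_iff]

lemma exists_mem_coprimeResidues_modEq {n : ℕ} (hn : 0 < n) {k : ℤ} (hk : IsCoprime k n) :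
    ∃ r ∈ coprimeResidues n, (r : ℤ) ≡ k [ZMOD n] := by
  obtain ⟨r, hr, hrk⟩ := exists_mem_Icc_modEq hn k
  exact ⟨r, mem_coprimeResidues.2
    ⟨hr, Nat.isCoprime_iff_coprime.1 ((isCoprime_iff_of_modEq hrk).2 hk)⟩, hrk⟩

lemma modEq_mul_iff {g h r s : ℤ} (hgh : IsCoprime g h) :
    r ≡ s [ZMOD g * h] ↔ r ≡ s [ZMOD g] ∧ r ≡ s [ZMOD h] := by
  simp only [Int.modEq_iff_dvd]
  exact ⟨fun H => ⟨dvd_of_mul_right_dvd H, dvd_of_mul_left_dvd H⟩, fun H => hgh.mul_dvd H.1 H.2⟩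

lemma exists_mem_coprimeResidues_mul {g h : ℕ} (hg : 0 < g) (hh : 0 < h) (hgh : g.Coprime h)
    {b s : ℤ} (hb : IsCoprime b g) (hs : IsCoprime s h) :
    ∃ r ∈ coprimeResidues (g * h), r ≡ b [ZMOD g] ∧ r ≡ s [ZMOD h] := by
  obtain ⟨u, v, huv⟩ := Nat.isCoprime_iff_coprime.2 hgh
  have hkg : u * g * s + v * h * b ≡ b [ZMOD g] :=
    Int.modEq_iff_dvd.2 ⟨u * (b - s), by linear_combination (-b) * huv⟩
  have hkh : u * g * s + v * h * b ≡ s [ZMOD h] :=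
    Int.modEq_iff_dvd.2 ⟨v * (s - b), by linear_combination (-s : ℤ) * huv⟩
  obtain ⟨r, hr, hrk⟩ := exists_mem_coprimeResidues_modEq (Nat.mul_pos hg hh)
    (k := u * g * s + v * h * b) (by
      push_cast
      exact ((isCoprime_iff_of_modEq hkg).2 hb).mul_right ((isCoprime_iff_of_modEq hkh).2 hs))
  push_cast at hrk
  rw [modEq_mul_iff (Nat.isCoprime_iff_coprime.2 hgh)] at hrk
  exact ⟨r, hr, hrk.1.trans hkg, hrk.2.trans hkh⟩

lemma sum_coprimeResidues_mul_filter_modEq {M : Type*} [AddCommMonoid M] {g h : ℕ} (hg : 0 < g)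
    (hh : 0 < h) (hgh : g.Coprime h) {b : ℤ} (hb : IsCoprime b g) {f : ℤ → M}
    (hf : ∀ r s : ℤ, r ≡ s [ZMOD h] → f r = f s) :
    ∑ r ∈ (coprimeResidues (g * h)).filter (fun r : ℕ => r ≡ b [ZMOD g]), f r =
      ∑ s ∈ coprimeResidues h, f s := by
  choose! φ hφ hφ' using exists_mem_Icc_modEq (n := h) hh
  refine Finset.sum_bij (fun r _ => φ r) ?_ ?_ ?_ fun r _ => hf _ _ (hφ' r).symm
  · intro r hr
    rw [Finset.mem_filter, mem_coprimeResidues] at hr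
    refine mem_coprimeResidues.2 ⟨hφ r, Nat.isCoprime_iff_coprime.1 ?_⟩
    exact (isCoprime_iff_of_modEq (hφ' r)).2
      (Nat.isCoprime_iff_coprime.2 (hr.1.2.coprime_dvd_right (dvd_mul_left h g)))
  · intro r hr s hs hrs
    rw [Finset.mem_filter, mem_coprimeResidues] at hr hs
    refine eq_of_mem_Icc_of_modEq hr.1.1 hs.1.1 ?_
    push_cast
    exact (modEq_mul_iff (Nat.isCoprime_iff_coprime.2 hgh)).2
      ⟨hr.2.trans hs.2.symm, (hφ' r).symm.trans (hrs ▸ hφ' s)⟩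
  · intro s hs
    rw [mem_coprimeResidues] at hs
    obtain ⟨r, hr, hrb, hrs⟩ :=
      exists_mem_coprimeResidues_mul hg hh hgh hb (Nat.isCoprime_iff_coprime.2 hs.2)
    exact ⟨r, Finset.mem_filter.2 ⟨hr, hrb⟩,
      eq_of_mem_Icc_of_modEq (hφ r) hs.1 ((hφ' r).trans hrs)⟩

/-! ### Denominators of small height -/

section Height

variable {y g h : ℕ}

lemma gcd_mul_of_dvd_of_coprime (hgy : g ∣ y) (hyh : y.Coprime h) : Nat.gcd y (g * h) = g := by
  rw [Nat.Coprime.gcd_mul_right_cancel_right g hyh.symm, Nat.gcd_eq_right hgy]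

lemma lcm_mul_of_dvd_of_coprime (hg : 0 < g) (hgy : g ∣ y) (hyh : y.Coprime h) :
    Nat.lcm y (g * h) = y * h := by
  rw [Nat.lcm, gcd_mul_of_dvd_of_coprime hgy hyh, mul_left_comm, Nat.mul_div_cancel_left _ hg]

lemma hgt_mul_of_dvd_of_coprime (hy : 0 < y) (hgy : g ∣ y) (hyh : y.Coprime h) :
    hgt y (g * h) = h := by
  have hg : 0 < g := Nat.pos_of_dvd_of_pos hgy hy
  rw [hgt, lcm_mul_of_dvd_of_coprime hg hgy hyh, gcd_mul_of_dvd_of_coprime hgy hyh,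
    Nat.mul_div_cancel_left _ hg, (hyh.coprime_dvd_left hgy).gcd_eq_one, if_neg (by omega),
    Nat.mul_div_cancel_left _ hy]

lemma coprime_div_gcd_of_coprime {q : ℕ} (hy : 0 < y)
    (hq : (Nat.gcd y q).Coprime (q / Nat.gcd y q)) : y.Coprime (q / Nat.gcd y q) := by
  have := hq.mul_left (Nat.coprime_div_gcd_div_gcd (Nat.gcd_pos_of_pos_left q hy))
  rwa [Nat.mul_div_cancel' (Nat.gcd_dvd_left y q)] at this

end Height

/-- The denominators `q` with `h_y(q) < Q`, over which the Low kernel sums. -/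
def lowDenominators (y : ℕ) (Q : ℝ) : Finset ℕ :=
  (Finset.Icc 1 (y * ⌈Q⌉₊)).filter fun q => (hgt y q : ℝ) < Q

/-- The heights `h_y(q) < Q` of the denominators `q` for which `Υ(·, q)` does not vanish
identically: the integers `1 ≤ h < Q` coprime to `y`. -/
def lowHeights (y : ℕ) (Q : ℝ) : Finset ℕ :=
  (Finset.Icc 1 ⌊Q⌋₊).filter fun h => (h : ℝ) < Q ∧ y.Coprime h

lemma mem_lowHeights {y : ℕ} {Q : ℝ} {h : ℕ} :
    h ∈ lowHeights y Q ↔ 0 < h ∧ (h : ℝ) < Q ∧ y.Coprime h := by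
  simp only [lowHeights, Finset.mem_filter, Finset.mem_Icc]
  exact ⟨fun H => ⟨H.1.1, H.2⟩, fun H => ⟨⟨H.1, Nat.le_floor H.2.1.le⟩, H.2⟩⟩

lemma mem_lowDenominators_mul {y g h : ℕ} {Q : ℝ} (hgy : g ∈ y.divisors) (hyh : y.Coprime h) :
    g * h ∈ lowDenominators y Q ↔ h ∈ lowHeights y Q := by
  obtain ⟨hgy, hy⟩ := Nat.mem_divisors.1 hgy
  have hg : 0 < g := Nat.pos_of_dvd_of_pos hgy (Nat.pos_of_ne_zero hy)
  simp only [lowDenominators, Finset.mem_filter, Finset.mem_Icc, mem_lowHeights,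
    hgt_mul_of_dvd_of_coprime (Nat.pos_of_ne_zero hy) hgy hyh]
  constructor
  · exact fun H => ⟨Nat.pos_of_mul_pos_left H.1.1, H.2, hyh⟩
  · refine fun H => ⟨⟨Nat.mul_pos hg H.1, ?_⟩, H.2.1⟩
    exact Nat.mul_le_mul (Nat.le_of_dvd (Nat.pos_of_ne_zero hy) hgy)
      (by exact_mod_cast H.2.1.le.trans (Nat.le_ceil Q))

lemma sum_lowDenominators_eq {M : Type*} [AddCommMonoid M] {y : ℕ} (hy : 0 < y) (Q : ℝ) {f : ℕ → M}
    (hf : ∀ q, 0 < q → ¬ (Nat.gcd y q).Coprime (q / Nat.gcd y q) → f q = 0) :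
    ∑ q ∈ lowDenominators y Q, f q =
      ∑ h ∈ lowHeights y Q, ∑ g ∈ y.divisors, f (g * h) := by
  rw [← Finset.sum_product']
  symm
  refine Finset.sum_of_injOn (fun p : ℕ × ℕ => p.2 * p.1) ?_ ?_ ?_ fun _ _ => rfl
  · rintro ⟨h, g⟩ hp ⟨h', g'⟩ hp' (heq : g * h = g' * h')
    obtain ⟨hh : h ∈ _, hg : g ∈ _⟩ := Finset.mem_product.1 hp
    obtain ⟨hh' : h' ∈ _, hg' : g' ∈ _⟩ := Finset.mem_product.1 hp'
    have hgg' : g = g' := by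
      rw [← gcd_mul_of_dvd_of_coprime (Nat.dvd_of_mem_divisors hg) (mem_lowHeights.1 hh).2.2, heq,
        gcd_mul_of_dvd_of_coprime (Nat.dvd_of_mem_divisors hg') (mem_lowHeights.1 hh').2.2]
    subst hgg'
    rw [Nat.eq_of_mul_eq_mul_left (Nat.pos_of_mem_divisors hg) heq]
  · rintro ⟨h, g⟩ hp
    obtain ⟨hh, hg⟩ := Finset.mem_product.1 hp
    exact (mem_lowDenominators_mul hg (mem_lowHeights.1 hh).2.2).2 hh
  · intro q hq hq_not
    refine hf q (Finset.mem_Icc.1 (Finset.mem_filter.1 hq).1).1 fun hcop => hq_not ?_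
    have hyh := coprime_div_gcd_of_coprime hy hcop
    have hg : Nat.gcd y q ∈ y.divisors := Nat.mem_divisors.2 ⟨Nat.gcd_dvd_left y q, hy.ne'⟩
    have hq_eq := Nat.mul_div_cancel' (Nat.gcd_dvd_right y q)
    rw [← hq_eq, mem_lowDenominators_mul hg hyh] at hq
    exact ⟨(q / Nat.gcd y q, Nat.gcd y q), Finset.mem_product.2 ⟨hq, hg⟩, hq_eq⟩

lemma sum_coprimeResidues_Ups_mul_e2pi {y g h : ℕ} (hy : 0 < y) (hgy : g ∣ y) (hh : 0 < h)
    (hyh : y.Coprime h) {b : ℤ} (hb : IsCoprime b y) (x : ℤ) :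
    ∑ a ∈ coprimeResidues (g * h), Ups y b a (g * h) * e2pi (x * (a / (g * h : ℕ))) =
      (Nat.totient h : ℂ)⁻¹ * (ArithmeticFunction.moebius h * ramanujanSum h x) *
        ramanujanSum g (x - b) := by
  have hg : 0 < g := Nat.pos_of_dvd_of_pos hgy hy
  have hgh : g.Coprime h := hyh.coprime_dvd_left hgy
  have hbg : IsCoprime b (g : ℤ) := hb.of_isCoprime_of_dvd_right (Int.natCast_dvd_natCast.2 hgy)
  have htotient : (Nat.totient y : ℂ) / (Nat.totient (Nat.lcm y (g * h)) : ℂ) =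
      (Nat.totient h : ℂ)⁻¹ := by
    have : (Nat.totient y : ℂ) ≠ 0 := by exact_mod_cast (Nat.totient_pos.2 hy).ne'
    rw [lcm_mul_of_dvd_of_coprime hg hgy hyh, Nat.totient_mul hyh]
    push_cast
    field_simp
  have hinner : ∀ r ∈ (coprimeResidues (g * h)).filter (fun r : ℕ => r ≡ b [ZMOD g]),
      ∑ a ∈ coprimeResidues (g * h),
        e2pi (-(((r * a : ℤ) : ℝ) / (g * h : ℕ))) * e2pi (x * (a / (g * h : ℕ))) =
      ramanujanSum h (x - r) * ramanujanSum g (x - b) := fun r hr => by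
    rw [ramanujanSum_congr ((Int.ModEq.refl x).sub (Finset.mem_filter.1 hr).2.symm),
      mul_comm (ramanujanSum h _), ← ramanujanSum_mul hg hh hgh, ramanujanSum]
    refine Finset.sum_congr rfl fun a _ => ?_
    rw [← e2pi_add]
    congr 1
    push_cast
    ring
  simp only [Ups_eq, gcd_mul_of_dvd_of_coprime hgy hyh, htotient, mul_assoc, Finset.sum_mul,
    ← Finset.mul_sum]
  rw [Finset.sum_comm, Finset.sum_congr rfl hinner, ← Finset.sum_mul,
    sum_coprimeResidues_mul_filter_modEq (f := fun r => ramanujanSum h (x - r)) hg hh hgh hbg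
      fun r s hrs => ramanujanSum_congr ((Int.ModEq.refl x).sub hrs),
    sum_ramanujanSum_sub hh, mul_assoc]

lemma sum_lowDenominators_Ups_mul_e2pi {y : ℕ} (hy : 0 < y) {b : ℤ} (hb : IsCoprime b y) (Q : ℝ)
    (x : ℤ) (W : ℕ → ℂ) :
    ∑ q ∈ lowDenominators y Q, ∑ a ∈ coprimeResidues q,
        W (Nat.lcm y q) * (Ups y b a q * e2pi (x * (a / q))) =
      ∑ h ∈ lowHeights y Q, W (y * h) * ((Nat.totient h : ℂ)⁻¹ *
        (ArithmeticFunction.moebius h * ramanujanSum h x) *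
        if (y : ℤ) ∣ x - b then (y : ℂ) else 0) := by
  rw [sum_lowDenominators_eq hy]
  · refine Finset.sum_congr rfl fun h hh => ?_
    obtain ⟨hh0, -, hyh⟩ := mem_lowHeights.1 hh
    rw [← sum_divisors_ramanujanSum hy, Finset.mul_sum, Finset.mul_sum]
    refine Finset.sum_congr rfl fun g hg => ?_
    rw [← Finset.mul_sum, lcm_mul_of_dvd_of_coprime (Nat.pos_of_mem_divisors hg)
      (Nat.dvd_of_mem_divisors hg) hyh,
      sum_coprimeResidues_Ups_mul_e2pi hy (Nat.dvd_of_mem_divisors hg) hh0 hyh hb]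
  · refine fun q hq hbad => Finset.sum_eq_zero fun a ha => ?_
    rw [Ups_eq_zero hq b hbad (Nat.isCoprime_iff_coprime.2 (mem_coprimeResidues.1 ha).2), zero_mul,
      mul_zero]

/-! ### Divisor estimates -/

lemma filter_dvd_Icc_eq_divisors {m n : ℕ} (hm : 0 < m) (hmn : m ≤ n) :
    (Finset.Icc 1 n).filter (· ∣ m) = m.divisors := by
  ext d
  rw [Finset.mem_filter, Finset.mem_Icc, Nat.mem_divisors]
  exact ⟨fun h => ⟨h.2, hm.ne'⟩, fun h => ⟨⟨Nat.pos_of_dvd_of_pos h.1 hm,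
    (Nat.le_of_dvd hm h.1).trans hmn⟩, h.1⟩⟩

lemma sum_filter_dvd_le (n : ℕ) {d : ℕ} (hd : 0 < d) {f : ℕ → ℝ} (hf : ∀ m, 0 ≤ f m) :
    ∑ m ∈ Finset.Icc 1 n with d ∣ m, f m ≤ ∑ e ∈ Finset.Icc 1 n, f (d * e) := by
  rw [← Finset.sum_image (g := fun e => d * e) fun a _ b _ h => Nat.eq_of_mul_eq_mul_left hd h]
  refine Finset.sum_le_sum_of_subset_of_nonneg (fun m hm => ?_) fun m _ _ => hf m
  obtain ⟨hm, e, rfl⟩ := Finset.mem_filter.1 hm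
  rw [Finset.mem_Icc] at hm
  exact Finset.mem_image.2 ⟨e, Finset.mem_Icc.2
    ⟨Nat.pos_of_mul_pos_left hm.1, (Nat.le_mul_of_pos_left e hd).trans hm.2⟩, rfl⟩

lemma sum_Icc_inv_le (n : ℕ) : ∑ e ∈ Finset.Icc 1 n, (e : ℝ)⁻¹ ≤ 1 + Real.log n := by
  simpa [harmonic_eq_sum_Icc] using harmonic_le_one_add_log n

lemma card_divisors_mul_le (m n : ℕ) :
    (m * n).divisors.card ≤ m.divisors.card * n.divisors.card := by
  rw [Nat.divisors_mul]
  exact Finset.card_mul_le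

lemma sum_card_divisors_mul_le_sq {f : ℕ → ℝ} (hf : ∀ m, 0 ≤ f m)
    (hmul : ∀ d e, f (d * e) ≤ f d * f e) (n : ℕ) :
    ∑ m ∈ Finset.Icc 1 n, m.divisors.card * f m ≤ (∑ m ∈ Finset.Icc 1 n, f m) ^ 2 := calc
  _ = ∑ m ∈ Finset.Icc 1 n, ∑ d ∈ Finset.Icc 1 n, if d ∣ m then f m else 0 := by
    refine Finset.sum_congr rfl fun m hm => ?_
    rw [Finset.mem_Icc] at hm
    rw [← Finset.sum_filter, Finset.sum_const, nsmul_eq_mul, filter_dvd_Icc_eq_divisors hm.1 hm.2]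
  _ = ∑ d ∈ Finset.Icc 1 n, ∑ m ∈ Finset.Icc 1 n with d ∣ m, f m := by
    rw [Finset.sum_comm]
    simp only [Finset.sum_filter]
  _ ≤ ∑ d ∈ Finset.Icc 1 n, ∑ e ∈ Finset.Icc 1 n, f d * f e :=
    Finset.sum_le_sum fun d hd => (sum_filter_dvd_le n (Finset.mem_Icc.1 hd).1 hf).trans
      (Finset.sum_le_sum fun e _ => hmul d e)
  _ = _ := by rw [← Finset.sum_mul_sum, sq]

lemma sum_card_divisors_pow_div_le (k n : ℕ) :
    ∑ m ∈ Finset.Icc 1 n, (m.divisors.card : ℝ) ^ k * (m : ℝ)⁻¹ ≤ (1 + Real.log n) ^ 2 ^ k := by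
  induction k with
  | zero => simpa using sum_Icc_inv_le n
  | succ k ih =>
    have hmul (d e : ℕ) : ((d * e).divisors.card : ℝ) ^ k * ((d * e : ℕ) : ℝ)⁻¹ ≤
        ((d.divisors.card : ℝ) ^ k * (d : ℝ)⁻¹) * ((e.divisors.card : ℝ) ^ k * (e : ℝ)⁻¹) := by
      have hcard : ((d * e).divisors.card : ℝ) ≤ d.divisors.card * e.divisors.card := by
        exact_mod_cast card_divisors_mul_le d e
      rw [mul_mul_mul_comm, ← mul_pow, ← mul_inv, Nat.cast_mul]
      gcongr
    calc _ = ∑ m ∈ Finset.Icc 1 n,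
          (m.divisors.card : ℝ) * ((m.divisors.card : ℝ) ^ k * (m : ℝ)⁻¹) := by
          simp only [pow_succ', mul_assoc]
      _ ≤ (∑ m ∈ Finset.Icc 1 n, (m.divisors.card : ℝ) ^ k * (m : ℝ)⁻¹) ^ 2 :=
          sum_card_divisors_mul_le_sq (fun m => by positivity) hmul n
      _ ≤ ((1 + Real.log n) ^ 2 ^ k) ^ 2 := by gcongr
      _ = _ := by rw [← pow_mul, pow_succ]

lemma one_add_log_le {δ : ℝ} (hδ : 0 < δ) {x : ℝ} (hx : 1 ≤ x) :
    1 + Real.log x ≤ (1 + 1 / δ) * x ^ δ := by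
  have hlog := Real.log_le_rpow_div (zero_le_one.trans hx) hδ
  have hone := Real.one_le_rpow hx hδ.le
  calc 1 + Real.log x ≤ x ^ δ + x ^ δ / δ := add_le_add hone hlog
    _ = _ := by ring

lemma one_add_log_pow_le {k : ℕ} (hk : k ≠ 0) {x : ℝ} (hx : 1 ≤ x) :
    (1 + Real.log x) ^ k ≤ (1 + k) ^ k * x := by
  have hlog := one_add_log_le (δ := (k : ℝ)⁻¹) (by positivity) hx
  have := Real.log_nonneg hx
  calc (1 + Real.log x) ^ k ≤ ((1 + 1 / (k : ℝ)⁻¹) * x ^ (k : ℝ)⁻¹) ^ k := by gcongr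
    _ = _ := by
      rw [mul_pow, Real.rpow_inv_natCast_pow (zero_le_one.trans hx) hk, one_div, inv_inv]

lemma card_divisors_pow_le (k : ℕ) {n : ℕ} (hn : 0 < n) :
    (n.divisors.card : ℝ) ^ k ≤ (1 + (2 : ℝ) ^ k) ^ 2 ^ k * n ^ 2 := by
  have hn1 : (1 : ℝ) ≤ n := by exact_mod_cast hn
  have hterm : (n.divisors.card : ℝ) ^ k * (n : ℝ)⁻¹ ≤ (1 + (2 : ℝ) ^ k) ^ 2 ^ k * n := calc
    _ ≤ ∑ m ∈ Finset.Icc 1 n, (m.divisors.card : ℝ) ^ k * (m : ℝ)⁻¹ :=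
      Finset.single_le_sum (f := fun m : ℕ => (m.divisors.card : ℝ) ^ k * (m : ℝ)⁻¹)
        (fun m _ => by positivity) (Finset.mem_Icc.2 ⟨hn, le_rfl⟩)
    _ ≤ (1 + Real.log n) ^ 2 ^ k := sum_card_divisors_pow_div_le k n
    _ ≤ _ := by simpa using one_add_log_pow_le (pow_ne_zero k two_ne_zero) hn1
  rw [← div_eq_mul_inv, div_le_iff₀ (by positivity)] at hterm
  linarith

lemma exists_card_divisors_le {ε : ℝ} (hε : 0 < ε) :
    ∃ C : ℝ, 0 < C ∧ ∀ n : ℕ, 0 < n → (n.divisors.card : ℝ) ≤ C * (n : ℝ) ^ ε := by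
  obtain ⟨k, hk⟩ := exists_nat_gt (2 / ε)
  have hk0 : 0 < k := by exact_mod_cast (by positivity : 0 < 2 / ε).trans hk
  rw [div_lt_iff₀ hε] at hk
  set C : ℝ := (1 + (2 : ℝ) ^ k) ^ 2 ^ k
  have hC : 1 ≤ C := one_le_pow₀ (le_add_of_nonneg_right (by positivity))
  refine ⟨C, by positivity, fun n hn => ?_⟩
  have hn1 : (1 : ℝ) ≤ n := by exact_mod_cast hn
  refine le_of_pow_le_pow_left₀ hk0.ne' (by positivity) ?_
  calc (n.divisors.card : ℝ) ^ k ≤ C * (n : ℝ) ^ 2 := card_divisors_pow_le k hn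
    _ ≤ C ^ k * ((n : ℝ) ^ ε) ^ k := by
      gcongr
      · exact le_self_pow₀ hC hk0.ne'
      · rw [← Real.rpow_natCast _ k, ← Real.rpow_mul (by positivity), ← Real.rpow_natCast _ 2]
        exact Real.rpow_le_rpow_of_exponent_le hn1 (by push_cast; linarith)
    _ = _ := (mul_pow _ _ _).symm

lemma exists_card_divisors_mul_log_le {ε : ℝ} (hε : 0 < ε) (K : ℕ) :
    ∃ C : ℝ, 0 < C ∧ ∀ n m : ℕ, 0 < n → 0 < m → m ≤ n ^ K →
      m.divisors.card * (1 + Real.log n) ≤ C * (n : ℝ) ^ ε := by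
  obtain ⟨c, hc, hcard⟩ := exists_card_divisors_le (ε := ε / (2 * (K + 1))) (by positivity)
  refine ⟨c * (1 + 1 / (ε / 2)), by positivity, fun n m hn hm hmn => ?_⟩
  have hn1 : (1 : ℝ) ≤ n := by exact_mod_cast hn
  have : 0 ≤ Real.log n := Real.log_nonneg hn1
  have hcard_n : (m.divisors.card : ℝ) ≤ c * (n : ℝ) ^ (ε / 2) := calc
    _ ≤ c * (m : ℝ) ^ (ε / (2 * (K + 1))) := hcard m hm
    _ ≤ c * ((n : ℝ) ^ (K + 1)) ^ (ε / (2 * (K + 1))) := by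
      gcongr
      exact_mod_cast hmn.trans (Nat.pow_le_pow_right hn K.le_succ)
    _ = _ := by
      rw [← Real.rpow_natCast, ← Real.rpow_mul (by positivity)]
      push_cast
      field_simp
  calc m.divisors.card * (1 + Real.log n)
      ≤ c * (n : ℝ) ^ (ε / 2) * ((1 + 1 / (ε / 2)) * (n : ℝ) ^ (ε / 2)) := by
        gcongr
        exact one_add_log_le (by positivity) hn1
    _ = c * (1 + 1 / (ε / 2)) * ((n : ℝ) ^ (ε / 2) * (n : ℝ) ^ (ε / 2)) := by ring
    _ = _ := by rw [← Real.rpow_add (by positivity), add_halves]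

lemma self_le_card_divisors_mul_totient (n : ℕ) : n ≤ n.divisors.card * n.totient := by
  conv_lhs => rw [← Nat.sum_totient n]
  refine Finset.sum_le_card_nsmul _ _ _ fun d hd => ?_
  exact Nat.le_of_dvd (Nat.totient_pos.2 (Nat.pos_of_ne_zero (Nat.mem_divisors.1 hd).2))
    (Nat.totient_dvd_of_dvd (Nat.dvd_of_mem_divisors hd))

lemma sum_div_dvd_le (n : ℕ) {d : ℕ} (hd : 0 < d) :
    ∑ h ∈ Finset.Icc 1 n with d ∣ h, (d : ℝ) * (h : ℝ)⁻¹ ≤ 1 + Real.log n := calc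
  _ ≤ ∑ e ∈ Finset.Icc 1 n, (d : ℝ) * ((d * e : ℕ) : ℝ)⁻¹ :=
    sum_filter_dvd_le n hd fun m => by positivity
  _ = ∑ e ∈ Finset.Icc 1 n, (e : ℝ)⁻¹ := Finset.sum_congr rfl fun e _ => by
    rw [Nat.cast_mul, mul_inv, mul_inv_cancel_left₀ (by positivity)]
  _ ≤ _ := sum_Icc_inv_le n

lemma inv_lcm_le_sum_divisors {m d : ℕ} (hm : 0 < m) (hd : 0 < d) :
    (Nat.lcm m d : ℝ)⁻¹ ≤
      ∑ e ∈ m.divisors, if e ∣ d then (m : ℝ)⁻¹ * ((e : ℝ) * (d : ℝ)⁻¹) else 0 := by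
  have hgcd_mul_lcm : (Nat.gcd m d : ℝ) * Nat.lcm m d = m * d := by
    exact_mod_cast Nat.gcd_mul_lcm m d
  have hlcm : (Nat.lcm m d : ℝ) ≠ 0 := by exact_mod_cast (Nat.lcm_pos hm hd).ne'
  have hsummand : (Nat.lcm m d : ℝ)⁻¹ = (m : ℝ)⁻¹ * ((Nat.gcd m d : ℝ) * (d : ℝ)⁻¹) := by
    field_simp
    linarith
  refine le_of_eq_of_le ?_ (Finset.single_le_sum (fun e _ => ?_)
    (Nat.mem_divisors.2 ⟨Nat.gcd_dvd_left m d, hm.ne'⟩))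
  · rw [if_pos (Nat.gcd_dvd_right m d), hsummand]
  · split_ifs <;> positivity

lemma sum_inv_lcm_le (n : ℕ) {m : ℕ} (hm : 0 < m) :
    ∑ d ∈ Finset.Icc 1 n, (Nat.lcm m d : ℝ)⁻¹ ≤
      m.divisors.card * (1 + Real.log n) * (m : ℝ)⁻¹ := calc
  _ ≤ ∑ d ∈ Finset.Icc 1 n, ∑ e ∈ m.divisors,
        if e ∣ d then (m : ℝ)⁻¹ * ((e : ℝ) * (d : ℝ)⁻¹) else 0 :=
    Finset.sum_le_sum fun d hd => inv_lcm_le_sum_divisors hm (Finset.mem_Icc.1 hd).1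
  _ = ∑ e ∈ m.divisors, (m : ℝ)⁻¹ * ∑ d ∈ Finset.Icc 1 n with e ∣ d, (e : ℝ) * (d : ℝ)⁻¹ := by
    rw [Finset.sum_comm]
    simp only [← Finset.sum_filter, Finset.mul_sum]
  _ ≤ ∑ _e ∈ m.divisors, (m : ℝ)⁻¹ * (1 + Real.log n) := by
    gcongr with e he
    exact sum_div_dvd_le n (Nat.pos_of_mem_divisors he)
  _ = _ := by rw [Finset.sum_const, nsmul_eq_mul]; ring

/-! ### Moments of the number of small divisors -/

lemma inv_totient_mul_norm_ramanujanSum_le {h : ℕ} (hh : 0 < h) (x : ℤ) :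
    (Nat.totient h : ℝ)⁻¹ * ‖ramanujanSum h x‖ ≤ h.divisors.card *
      ∑ d ∈ h.divisors.filter (fun d : ℕ => (d : ℤ) ∣ x), (d : ℝ) * (h : ℝ)⁻¹ := by
  have htotient : (Nat.totient h : ℝ)⁻¹ ≤ h.divisors.card * (h : ℝ)⁻¹ := by
    have hφ : (0 : ℝ) < h.totient := by exact_mod_cast Nat.totient_pos.2 hh
    rw [← div_eq_mul_inv, inv_le_iff_one_le_mul₀ hφ, div_mul_eq_mul_div, one_le_div (by positivity)]
    exact_mod_cast self_le_card_divisors_mul_totient h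
  calc _ ≤ (h.divisors.card * (h : ℝ)⁻¹) *
        ∑ d ∈ h.divisors.filter (fun d : ℕ => (d : ℤ) ∣ x), (d : ℝ) := by
        gcongr
        exact norm_ramanujanSum_le hh x
    _ = _ := by rw [← Finset.sum_mul]; ring

lemma sum_inv_totient_mul_norm_ramanujanSum_le {n : ℕ} {D : Finset ℕ}
    (hD : D ⊆ Finset.Icc 1 n) (hdvd : ∀ h ∈ D, ∀ d, d ∣ h → d ∈ D) {B : ℝ} (hB : 0 ≤ B)
    (hcard : ∀ h ∈ D, (h.divisors.card : ℝ) ≤ B) (x : ℤ) :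
    ∑ h ∈ D, (Nat.totient h : ℝ)⁻¹ * ‖ramanujanSum h x‖ ≤
      B * (1 + Real.log n) * (D.filter (fun d : ℕ => (d : ℤ) ∣ x)).card := by
  have hpos (h) (hh : h ∈ D) : 0 < h := (Finset.mem_Icc.1 (hD hh)).1
  have hfilter (h) (hh : h ∈ D) : h.divisors.filter (fun d : ℕ => (d : ℤ) ∣ x) =
      (D.filter (fun d : ℕ => (d : ℤ) ∣ x)).filter (· ∣ h) := by
    ext d
    simp only [Finset.mem_filter, Nat.mem_divisors]
    exact ⟨fun hd => ⟨⟨hdvd h hh d hd.1.1, hd.2⟩, hd.1.1⟩,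
      fun hd => ⟨⟨hd.2, (hpos h hh).ne'⟩, hd.1.2⟩⟩
  calc _ ≤ ∑ h ∈ D, B * ∑ d ∈ D.filter (fun d : ℕ => (d : ℤ) ∣ x),
        if d ∣ h then (d : ℝ) * (h : ℝ)⁻¹ else 0 := by
        refine Finset.sum_le_sum fun h hh => ?_
        rw [← Finset.sum_filter, ← hfilter h hh]
        refine (inv_totient_mul_norm_ramanujanSum_le (hpos h hh) x).trans ?_
        gcongr
        exact hcard h hh
    _ = B * ∑ d ∈ D.filter (fun d : ℕ => (d : ℤ) ∣ x), ∑ h ∈ D with d ∣ h,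
          (d : ℝ) * (h : ℝ)⁻¹ := by
        rw [← Finset.mul_sum, Finset.sum_comm]
        simp only [Finset.sum_filter]
    _ ≤ B * ∑ _d ∈ D.filter (fun d : ℕ => (d : ℤ) ∣ x), (1 + Real.log n) := by
        gcongr with d hd
        refine (Finset.sum_le_sum_of_subset_of_nonneg (Finset.filter_subset_filter _ hD)
          fun h _ _ => by positivity).trans
          (sum_div_dvd_le n (hpos d (Finset.mem_filter.1 hd).1))
    _ = _ := by rw [Finset.sum_const, nsmul_eq_mul]; ring

section Moments

variable {ι : Type*} (V : Finset ι) (u : ι → ℤ) (D : Finset ℕ)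

lemma sum_card_filter_dvd_pow_succ (m k : ℕ) :
    ∑ i ∈ V with (m : ℤ) ∣ u i, ((D.filter (fun d : ℕ => (d : ℤ) ∣ u i)).card : ℝ) ^ (k + 1) =
      ∑ d ∈ D, ∑ i ∈ V with (Nat.lcm m d : ℤ) ∣ u i,
        ((D.filter (fun d : ℕ => (d : ℤ) ∣ u i)).card : ℝ) ^ k := by
  simp only [pow_succ', ← nsmul_eq_mul, ← Finset.sum_const]
  refine Finset.sum_comm' fun i d => ?_
  simp only [Finset.mem_filter, Int.natCast_dvd, Nat.lcm_dvd_iff]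
  tauto

variable {V u D}

lemma sum_card_filter_dvd_pow_le {y n M : ℕ} (hD : D ⊆ Finset.Icc 1 n)
    (hDy : ∀ d ∈ D, y.Coprime d) {A B : ℝ} (hA : 0 ≤ A) (hB : 0 ≤ B)
    (hτ : ∀ m : ℕ, 0 < m → m ≤ M → m.divisors.card * (1 + Real.log n) ≤ B)
    (hV : ∀ m : ℕ, 0 < m → y.Coprime m → m ≤ M →
      ((V.filter (fun i => (m : ℤ) ∣ u i)).card : ℝ) ≤ A * (m : ℝ)⁻¹)
    (k : ℕ) {m : ℕ} (hm : 0 < m) (hym : y.Coprime m) (hM : m * n ^ k ≤ M) :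
    ∑ i ∈ V with (m : ℤ) ∣ u i, ((D.filter (fun d : ℕ => (d : ℤ) ∣ u i)).card : ℝ) ^ k ≤
      B ^ k * (A * (m : ℝ)⁻¹) := by
  induction k generalizing m with
  | zero => simpa using hV m hm hym (by simpa using hM)
  | succ k ih =>
    obtain rfl | hn := n.eq_zero_or_pos
    · obtain rfl : D = ∅ := by simpa using hD
      simpa using by positivity
    calc _ = ∑ d ∈ D, ∑ i ∈ V with (Nat.lcm m d : ℤ) ∣ u i,
          ((D.filter (fun d : ℕ => (d : ℤ) ∣ u i)).card : ℝ) ^ k :=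
          sum_card_filter_dvd_pow_succ V u D m k
      _ ≤ ∑ d ∈ D, B ^ k * (A * (Nat.lcm m d : ℝ)⁻¹) := by
          gcongr with d hd
          obtain ⟨hd1, hdn⟩ := Finset.mem_Icc.1 (hD hd)
          have hlcm : Nat.lcm m d ≤ m * n :=
            (Nat.le_of_dvd (by positivity) (Nat.lcm_dvd_mul m d)).trans (by gcongr)
          refine ih (Nat.lcm_pos hm hd1)
            ((hym.mul_right (hDy d hd)).coprime_dvd_right (Nat.lcm_dvd_mul m d)) ?_
          calc _ ≤ m * n * n ^ k := by gcongr
            _ = m * n ^ (k + 1) := by ring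
            _ ≤ M := hM
      _ ≤ ∑ d ∈ Finset.Icc 1 n, B ^ k * (A * (Nat.lcm m d : ℝ)⁻¹) := by gcongr
      _ = B ^ k * (A * ∑ d ∈ Finset.Icc 1 n, (Nat.lcm m d : ℝ)⁻¹) := by
          simp only [Finset.mul_sum]
      _ ≤ B ^ k * (A * (B * (m : ℝ)⁻¹)) := by
          gcongr
          refine (sum_inv_lcm_le n hm).trans ?_
          gcongr
          exact hτ m hm ((Nat.le_mul_of_pos_right m (by positivity)).trans hM)
      _ = B ^ (k + 1) * (A * (m : ℝ)⁻¹) := by ring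

end Moments

lemma card_Ioc_filter_modEq_le {a b k : ℤ} (hab : a ≤ b) (hk : 0 < k) (v : ℤ) :
    (((Finset.Ioc a b).filter (· ≡ v [ZMOD k])).card : ℝ) ≤ (b - a) / k + 1 := by
  have : (0 : ℚ) < k := by exact_mod_cast hk
  have hfloor_le := Int.floor_le ((b - v) / (k : ℚ))
  have hlt_floor := Int.lt_floor_add_one ((a - v) / (k : ℚ))
  have hle : ((⌊(b - v) / (k : ℚ)⌋ - ⌊(a - v) / (k : ℚ)⌋ : ℤ) : ℚ) ≤ (b - a) / k + 1 := by
    have : ((b : ℚ) - a) / k = (b - v) / k - (a - v) / k := by ring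
    push_cast
    linarith
  have hcard : (((Finset.Ioc a b).filter (· ≡ v [ZMOD k])).card : ℚ) ≤ (b - a) / k + 1 := by
    rw [← Int.cast_natCast, Int.Ioc_filter_modEq_card a b hk v, Int.cast_max]
    have : (0 : ℚ) ≤ b - a := by exact_mod_cast sub_nonneg.2 hab
    exact max_le hle (by simp only [Int.cast_zero]; positivity)
  exact_mod_cast hcard

lemma div_le_mul_rpow_of_pow_le {T A B v ρ : ℝ} {k : ℕ} (hA : 0 < A) (hB : 0 ≤ B)
    (hv : 0 ≤ v) (hvA : v ≤ A) (hρ : 0 ≤ ρ) (hρk : ρ * (k + 1) ≤ k)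
    (h : T ^ (k + 1) ≤ v ^ k * (B ^ (k + 1) * A)) : T / A ≤ B * (v / A) ^ ρ := by
  have hvA0 : 0 ≤ v / A := by positivity
  have hpow : (v / A) ^ k ≤ ((v / A) ^ ρ) ^ (k + 1) := by
    rw [← Real.rpow_natCast, ← Real.rpow_natCast _ (k + 1), ← Real.rpow_mul hvA0]
    exact Real.rpow_le_rpow_of_exponent_ge' hvA0 ((div_le_one hA).2 hvA) (by positivity)
      (by exact_mod_cast hρk)
  refine le_of_pow_le_pow_left₀ k.succ_ne_zero (by positivity) ?_
  calc (T / A) ^ (k + 1) = T ^ (k + 1) / A ^ (k + 1) := div_pow _ _ _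
    _ ≤ v ^ k * (B ^ (k + 1) * A) / A ^ (k + 1) := by gcongr
    _ = B ^ (k + 1) * (v / A) ^ k := by rw [div_pow]; field_simp; ring
    _ ≤ B ^ (k + 1) * ((v / A) ^ ρ) ^ (k + 1) := by gcongr
    _ = (B * (v / A) ^ ρ) ^ (k + 1) := (mul_pow _ _ _).symm

section Progression

variable {y N : ℕ} {F : Finset ℤ}

lemma card_filter_dvd_sub_le {m : ℕ} (hy : 0 < y) (hm : 0 < m) (hym : y.Coprime m)
    (hN : y * m ≤ N) (b x : ℤ) (hF : ∀ z ∈ F, z ∈ Set.Icc (0 : ℤ) N) :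
    (((F.filter (fun z => (y : ℤ) ∣ x - z - b)).filter (fun z => (m : ℤ) ∣ x - z)).card : ℝ) ≤
      3 * N / y * (m : ℝ)⁻¹ := by
  obtain hempty | ⟨w, hw⟩ := Finset.eq_empty_or_nonempty
    ((F.filter (fun z => (y : ℤ) ∣ x - z - b)).filter (fun z => (m : ℤ) ∣ x - z))
  · rw [hempty, Finset.card_empty, Nat.cast_zero]
    positivity
  simp only [Finset.mem_filter] at hw
  have hsubset : (F.filter (fun z => (y : ℤ) ∣ x - z - b)).filter (fun z => (m : ℤ) ∣ x - z) ⊆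
      (Finset.Ioc (-1) (N : ℤ)).filter (· ≡ w [ZMOD (y * m : ℕ)]) := by
    intro z hz
    simp only [Finset.mem_filter] at hz
    have hzN := hF z hz.1.1
    rw [Finset.mem_filter, Finset.mem_Ioc, Nat.cast_mul, modEq_mul_iff hym.isCoprime,
      Int.modEq_iff_dvd, Int.modEq_iff_dvd]
    refine ⟨⟨by linarith [hzN.1], hzN.2⟩, ?_, ?_⟩
    · simpa using dvd_sub hz.1.2 hw.1.2
    · simpa using dvd_sub hz.2 hw.2
  have hym0 : (0 : ℝ) < (y * m : ℕ) := by positivity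
  have hNR : ((y * m : ℕ) : ℝ) ≤ N := by exact_mod_cast hN
  have hone : (1 : ℝ) ≤ (y * m : ℕ) := by exact_mod_cast Nat.mul_pos hy hm
  calc _ ≤ (((Finset.Ioc (-1) (N : ℤ)).filter (· ≡ w [ZMOD (y * m : ℕ)])).card : ℝ) := by
        exact_mod_cast Finset.card_le_card hsubset
    _ ≤ (N + 1) / (y * m : ℕ) + 1 := by
        simpa using card_Ioc_filter_modEq_le (a := -1) (b := N) (k := (y * m : ℕ)) (by linarith)
          (by exact_mod_cast Nat.mul_pos hy hm) w
    _ ≤ 3 * N / (y * m : ℕ) := by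
        rw [div_add_one hym0.ne']
        gcongr
        linarith
    _ = _ := by push_cast; field_simp

lemma sum_card_lowHeights_dvd_pow_le {Q : ℝ} (hy : 0 < y) {k : ℕ}
    (hN : y * ⌊Q⌋₊ ^ k ≤ N) {B : ℝ} (hB : 0 ≤ B)
    (hτ : ∀ m : ℕ, 0 < m → m ≤ ⌊Q⌋₊ ^ k → m.divisors.card * (1 + Real.log ⌊Q⌋₊) ≤ B)
    (b x : ℤ) (hF : ∀ z ∈ F, z ∈ Set.Icc (0 : ℤ) N) :
    ∑ z ∈ F with (y : ℤ) ∣ x - z - b,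
      (((lowHeights y Q).filter (fun d : ℕ => (d : ℤ) ∣ x - z)).card : ℝ) ^ k ≤
      B ^ k * (3 * N / y) := by
  simpa using sum_card_filter_dvd_pow_le (m := 1) (D := lowHeights y Q) (u := fun z => x - z)
    (V := F.filter (fun z => (y : ℤ) ∣ x - z - b)) (A := 3 * N / y) (Finset.filter_subset _ _)
    (fun d hd => (mem_lowHeights.1 hd).2.2) (by positivity) hB hτ
    (fun m hm hym hmM => card_filter_dvd_sub_le hy hm hym
      ((Nat.mul_le_mul_left y hmM).trans hN) b x hF)
    k one_pos (Nat.coprime_one_right y) (by simp)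

lemma sum_card_lowHeights_dvd_le {Q ρ : ℝ} (hy : 0 < y) (hQ : 1 ≤ Q) {k : ℕ} (hρ : 0 ≤ ρ)
    (hρk : ρ * (k + 1) ≤ k) (hN : y * ⌊Q⌋₊ ^ (k + 1) ≤ N) {B : ℝ} (hB : 0 ≤ B)
    (hτ : ∀ m : ℕ, 0 < m → m ≤ ⌊Q⌋₊ ^ (k + 1) → m.divisors.card * (1 + Real.log ⌊Q⌋₊) ≤ B)
    (b x : ℤ) (hF : ∀ z ∈ F, z ∈ Set.Icc (0 : ℤ) N) :
    (y : ℝ) / N * ∑ z ∈ F with (y : ℤ) ∣ x - z - b,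
      (((lowHeights y Q).filter (fun d : ℕ => (d : ℤ) ∣ x - z)).card : ℝ) ≤
      3 * B * ((y : ℝ) / N * F.card) ^ ρ := by
  set V := F.filter (fun z => (y : ℤ) ∣ x - z - b)
  have hfloor : 0 < ⌊Q⌋₊ := Nat.floor_pos.2 hQ
  have hN0 : 0 < N := lt_of_lt_of_le (by positivity) hN
  have hyN : y * 1 ≤ N := (Nat.mul_le_mul_left y (Nat.one_le_pow _ _ hfloor)).trans hN
  have hVA : (V.card : ℝ) ≤ 3 * N / y := by
    simpa using card_filter_dvd_sub_le hy one_pos (Nat.coprime_one_right y) hyN b x hF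
  have hHolder := div_le_mul_rpow_of_pow_le (by positivity : (0 : ℝ) < 3 * N / y) hB
    V.card.cast_nonneg hVA hρ hρk
    ((pow_sum_le_card_mul_sum_pow (fun z _ => Nat.cast_nonneg _) k).trans
      (mul_le_mul_of_nonneg_left (sum_card_lowHeights_dvd_pow_le hy hN hB hτ b x hF)
        (by positivity)))
  have hVF : (V.card : ℝ) / (3 * N / y) ≤ y / N * F.card := calc
    _ = (y : ℝ) / N * (V.card / 3) := by field_simp
    _ ≤ _ := by
      gcongr
      have : (V.card : ℝ) ≤ F.card := by exact_mod_cast Finset.card_filter_le _ _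
      linarith [V.card.cast_nonneg (α := ℝ)]
  calc _ = 3 * ((∑ z ∈ V, (((lowHeights y Q).filter (fun d : ℕ => (d : ℤ) ∣ x - z)).card : ℝ)) /
        (3 * N / y)) := by field_simp
    _ ≤ 3 * (B * (y / N * F.card) ^ ρ) := by
      gcongr
      exact hHolder.trans (by gcongr)
    _ = _ := by ring

lemma sum_lowHeights_norm_ramanujanSum_le {Q B : ℝ} (hQ : 1 ≤ Q) (hB : 0 ≤ B)
    (hτ : ∀ h : ℕ, 0 < h → h ≤ ⌊Q⌋₊ → h.divisors.card * (1 + Real.log ⌊Q⌋₊) ≤ B) (x : ℤ) :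
    ∑ h ∈ lowHeights y Q, (Nat.totient h : ℝ)⁻¹ * ‖ramanujanSum h x‖ ≤
      B * ((lowHeights y Q).filter (fun d : ℕ => (d : ℤ) ∣ x)).card := by
  have hlog : 0 < 1 + Real.log ⌊Q⌋₊ := add_pos_of_pos_of_nonneg one_pos
    (Real.log_nonneg (by exact_mod_cast Nat.floor_pos.2 hQ))
  have hdivisor : ∀ h ∈ lowHeights y Q, ∀ d : ℕ, d ∣ h → d ∈ lowHeights y Q :=
      fun h hh d hd => by
      obtain ⟨hh0, hhQ, hyh⟩ := mem_lowHeights.1 hh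
      refine mem_lowHeights.2 ⟨Nat.pos_of_dvd_of_pos hd hh0, lt_of_le_of_lt ?_ hhQ,
        hyh.coprime_dvd_right hd⟩
      exact_mod_cast Nat.le_of_dvd hh0 hd
  have hcard : ∀ h ∈ lowHeights y Q, (h.divisors.card : ℝ) ≤ B / (1 + Real.log ⌊Q⌋₊) :=
    fun h hh => by
      obtain ⟨hh0, hhn⟩ := Finset.mem_Icc.1 (Finset.filter_subset _ _ hh)
      exact (le_div_iff₀ hlog).2 (hτ h hh0 hhn)
  simpa only [div_mul_cancel₀ _ hlog.ne'] using
    sum_inv_totient_mul_norm_ramanujanSum_le (D := lowHeights y Q) (Finset.filter_subset _ _)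
      hdivisor (by positivity) hcard x

lemma exists_sum_ramanujanSum_le {ε ρ : ℝ} (hε : 0 < ε) (hρ : 0 ≤ ρ) {k : ℕ}
    (hρk : ρ * (k + 1) ≤ k) :
    ∃ C : ℝ, 0 < C ∧ ∀ (y N : ℕ) (Q : ℝ), 0 < y → 1 ≤ Q → y * Q ^ (k + 1) ≤ N →
      ∀ (b x : ℤ) (F : Finset ℤ), (∀ z ∈ F, z ∈ Set.Icc (0 : ℤ) N) →
        (y : ℝ) / N * ∑ z ∈ F with (y : ℤ) ∣ x - z - b,
          ∑ h ∈ lowHeights y Q, (Nat.totient h : ℝ)⁻¹ * ‖ramanujanSum h (x - z)‖ ≤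
        C * Q ^ ε * ((y : ℝ) / N * F.card) ^ ρ := by
  obtain ⟨c, hc, hτ⟩ := exists_card_divisors_mul_log_le (half_pos hε) (k + 1)
  refine ⟨3 * c ^ 2, by positivity, fun y N Q hy hQ hN b x F hF => ?_⟩
  have hn : 0 < ⌊Q⌋₊ := Nat.floor_pos.2 hQ
  have hnQ : (⌊Q⌋₊ : ℝ) ≤ Q := Nat.floor_le (by positivity)
  set B : ℝ := c * (⌊Q⌋₊ : ℝ) ^ (ε / 2)
  have hNn : y * ⌊Q⌋₊ ^ (k + 1) ≤ N := by
    have : (y : ℝ) * (⌊Q⌋₊ : ℝ) ^ (k + 1) ≤ N := le_trans (by gcongr) hN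
    exact_mod_cast this
  calc _ ≤ (y : ℝ) / N * ∑ z ∈ F with (y : ℤ) ∣ x - z - b,
        B * ((lowHeights y Q).filter (fun d : ℕ => (d : ℤ) ∣ x - z)).card := by
        gcongr with z
        exact sum_lowHeights_norm_ramanujanSum_le hQ (by positivity) (fun h hh hhn => hτ _ h hn hh
          (hhn.trans (Nat.le_self_pow k.succ_ne_zero _))) (x - z)
    _ ≤ B * (3 * B * ((y : ℝ) / N * F.card) ^ ρ) := by
        rw [← Finset.mul_sum, mul_left_comm]
        refine mul_le_mul_of_nonneg_left ?_ (by positivity)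
        exact sum_card_lowHeights_dvd_le hy hQ hρ hρk hNn (by positivity)
          (fun m hm hmn => hτ _ m hn hm hmn) b x hF
    _ = 3 * c ^ 2 * (⌊Q⌋₊ : ℝ) ^ ε * ((y : ℝ) / N * F.card) ^ ρ := by
        rw [← add_halves ε, Real.rpow_add (by positivity)]
        ring
    _ ≤ _ := by gcongr

end Progression

/-! ### The kernel of an arc -/

lemma continuous_Mhat (x : ℝ) : Continuous (Mhat x) := by
  unfold Mhat
  fun_prop

/-- The profile `θ ↦ M̂_{N/ℓ}(ℓθ) χ(ℓ²θ)` of the multiplier `L̂^{a,q}_{N,y}` around its centre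
`a/q`, where `ℓ = lcm(y, q)`. -/
def arcProfile (χ : ℝ → ℝ) (N : ℝ) (l : ℕ) (θ : ℝ) : ℂ :=
  Mhat (N / l) (l * θ) * (χ ((l : ℝ) ^ 2 * θ) : ℂ)

/-- The inverse Fourier transform of `arcProfile` on the whole line, which is the kernel of the
arc at `a/q` up to modulation when `q > 1`. -/
def lineKernel (χ : ℝ → ℝ) (N : ℝ) (l : ℕ) (x : ℝ) : ℂ :=
  ∫ θ : ℝ, arcProfile χ N l θ * e2pi (x * θ)

/-- The part of `lineKernel` that the arc `q = 1` loses: this arc is centred at `ξ = 1`, so that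
`∫₀¹` only sees the frequencies `θ ≤ 0`. -/
def halfLineKernel (χ : ℝ → ℝ) (N : ℝ) (l : ℕ) (x : ℝ) : ℂ :=
  ∫ θ in (0 : ℝ)..1, arcProfile χ N l θ * e2pi (x * θ)

section ArcKernel

variable {χ : ℝ → ℝ}

open SchwartzMap FourierTransform in
lemma exists_norm_integral_mul_e2pi_le (hχ : ContDiff ℝ (⊤ : ℕ∞) χ) (hχc : HasCompactSupport χ) :
    ∃ A : ℝ, 0 < A ∧ ∀ t : ℝ, ‖∫ θ : ℝ, (χ θ : ℂ) * e2pi (t * θ)‖ ≤ A * (1 + t ^ 2)⁻¹ := by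
  have hsupp : HasCompactSupport (fun θ : ℝ => (χ θ : ℂ)) :=
    hχc.comp_left (g := fun r : ℝ => (r : ℂ)) Complex.ofReal_zero
  let f : 𝓢(ℝ, ℂ) := hsupp.toSchwartzMap (Complex.ofRealCLM.contDiff.comp hχ)
  have hf (t : ℝ) : (𝓕⁻ f) t = ∫ θ : ℝ, (χ θ : ℂ) * e2pi (t * θ) := by
    rw [fourierInv_coe, Real.fourierInv_eq']
    refine MeasureTheory.integral_congr_ae (Filter.Eventually.of_forall fun θ => ?_)
    simp only [show f θ = (χ θ : ℂ) from rfl, smul_eq_mul, e2pi, RCLike.inner_apply, conj_trivial]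
    rw [mul_comm]
    push_cast
    ring_nf
  obtain ⟨C₀, hC₀, hdecay₀⟩ := (𝓕⁻ f).decay 0 0
  obtain ⟨C₂, hC₂, hdecay₂⟩ := (𝓕⁻ f).decay 2 0
  refine ⟨C₀ + C₂, by positivity, fun t => ?_⟩
  specialize hdecay₀ t
  specialize hdecay₂ t
  simp only [norm_iteratedFDeriv_zero, pow_zero, one_mul, Real.norm_eq_abs, sq_abs]
    at hdecay₀ hdecay₂
  rw [← hf, ← div_eq_mul_inv, le_div_iff₀ (by positivity)]
  linarith

lemma norm_integral_comp_mul_e2pi_le {A c : ℝ} (hc : 0 < c)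
    (hχ : ∀ t : ℝ, ‖∫ θ : ℝ, (χ θ : ℂ) * e2pi (t * θ)‖ ≤ A * (1 + t ^ 2)⁻¹) (t : ℝ) :
    ‖∫ θ : ℝ, (χ (c * θ) : ℂ) * e2pi (t * θ)‖ ≤ c⁻¹ * (A * (1 + (t / c) ^ 2)⁻¹) := by
  have hscale : ∫ θ : ℝ, (χ (c * θ) : ℂ) * e2pi (t * θ) =
      |c⁻¹| • ∫ θ : ℝ, (χ θ : ℂ) * e2pi (t / c * θ) := by
    rw [← MeasureTheory.Measure.integral_comp_mul_left (fun θ : ℝ => (χ θ : ℂ) * e2pi (t / c * θ))]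
    simp only [← mul_assoc, div_mul_cancel₀ t hc.ne']
  rw [hscale, norm_smul, Real.norm_eq_abs, abs_abs, abs_of_pos (by positivity)]
  gcongr
  exact hχ _

lemma inv_one_add_sq_le_arctan {δ : ℝ} (hδ : 0 < δ) (hδ1 : δ ≤ 1) (t : ℝ) :
    (1 + t ^ 2)⁻¹ ≤ 3 * δ⁻¹ * (Real.arctan (t + δ) - Real.arctan t) := by
  obtain ⟨c, ⟨htc, hct⟩, hslope⟩ :=
    exists_deriv_eq_slope Real.arctan (lt_add_of_pos_right t hδ)
      Real.continuous_arctan.continuousOn Real.differentiable_arctan.differentiableOn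
  rw [Real.deriv_arctan, add_sub_cancel_left, eq_div_iff hδ.ne'] at hslope
  rw [← hslope, mul_assoc, mul_comm (1 / (1 + c ^ 2)), inv_mul_cancel_left₀ hδ.ne', mul_one_div,
    inv_eq_one_div, div_le_div_iff₀ (by positivity) (by positivity)]
  have hdist : (c - t) ^ 2 ≤ 1 := (sq_le_one_iff₀ (by linarith)).2 (by linarith)
  nlinarith [sq_nonneg (c - 2 * t)]

lemma sum_inv_one_add_sq_le {l : ℕ} (hl : 0 < l) (s : ℝ) (m : ℕ) :
    ∑ n ∈ Finset.range m, (1 + ((s - n) / l) ^ 2)⁻¹ ≤ 3 * Real.pi * l := by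
  have hl1 : (l : ℝ)⁻¹ ≤ 1 := inv_le_one_of_one_le₀ (by exact_mod_cast hl)
  have hterm (n : ℕ) : (1 + ((s - n) / l) ^ 2)⁻¹ ≤
      3 * l * (Real.arctan ((s - n + 1) / l) - Real.arctan ((s - (n + 1 : ℕ) + 1) / l)) := by
    convert inv_one_add_sq_le_arctan (by positivity : (0 : ℝ) < (l : ℝ)⁻¹) hl1 ((s - n) / l)
      using 4
    · rw [inv_inv]
    · field_simp
    · push_cast; ring
  calc _ ≤ 3 * l * ∑ n ∈ Finset.range m,
        (Real.arctan ((s - n + 1) / l) - Real.arctan ((s - (n + 1 : ℕ) + 1) / l)) := by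
        rw [Finset.mul_sum]
        exact Finset.sum_le_sum fun n _ => hterm n
    _ = 3 * l * (Real.arctan ((s - (0 : ℕ) + 1) / l) - Real.arctan ((s - m + 1) / l)) := by
        rw [Finset.sum_range_sub' (fun n : ℕ => Real.arctan ((s - n + 1) / l))]
    _ ≤ 3 * l * (Real.pi / 2 - -(Real.pi / 2)) := by
        gcongr
        · exact (Real.arctan_lt_pi_div_two _).le
        · exact (Real.neg_pi_div_two_lt_arctan _).le
    _ = _ := by ring

lemma continuous_arcProfile (hχ : Continuous χ) (N : ℝ) (l : ℕ) :
    Continuous (arcProfile χ N l) :=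
  ((continuous_Mhat _).comp (by fun_prop)).mul (by fun_prop)

lemma lineKernel_eq_sum (hχ : Continuous χ) (hχc : HasCompactSupport χ) (N : ℝ) {l : ℕ}
    (hl : l ≠ 0) (x : ℝ) :
    lineKernel χ N l x = ((1 / (N / l) : ℝ) : ℂ) * ∑ n ∈ Finset.range ⌈N / l⌉₊,
      ∫ θ : ℝ, (χ ((l : ℝ) ^ 2 * θ) : ℂ) * e2pi ((x - n * l) * θ) := by
  have hsupp : HasCompactSupport fun θ : ℝ => (χ ((l : ℝ) ^ 2 * θ) : ℂ) :=
    (hχc.comp_homeomorph (Homeomorph.mulLeft₀ ((l : ℝ) ^ 2) (by positivity))).comp_left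
      (g := fun r : ℝ => (r : ℂ)) Complex.ofReal_zero
  have hintegrable (s : ℝ) : MeasureTheory.Integrable
      (fun θ : ℝ => (χ ((l : ℝ) ^ 2 * θ) : ℂ) * e2pi (s * θ)) :=
    Continuous.integrable_of_hasCompactSupport (by fun_prop) hsupp.mul_right
  rw [← MeasureTheory.integral_finsetSum _ fun n _ => hintegrable _,
    ← MeasureTheory.integral_const_mul, lineKernel]
  refine MeasureTheory.integral_congr_ae (Filter.Eventually.of_forall fun θ => ?_)
  simp only [arcProfile, Mhat]
  rw [mul_assoc, mul_assoc, Finset.sum_mul]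
  congr 1
  refine Finset.sum_congr rfl fun n _ => ?_
  rw [show (x - n * l) * θ = -(n * (l * θ)) + x * θ by ring, e2pi_add]
  ring

lemma exists_norm_lineKernel_le (hχ : ContDiff ℝ (⊤ : ℕ∞) χ) (hχc : HasCompactSupport χ) :
    ∃ C : ℝ, 0 < C ∧ ∀ N : ℝ, 0 < N → ∀ l : ℕ, 0 < l → ∀ x : ℝ,
      ‖lineKernel χ N l x‖ ≤ C * N⁻¹ := by
  obtain ⟨A, hA, hdecay⟩ := exists_norm_integral_mul_e2pi_le hχ hχc
  refine ⟨A * (3 * Real.pi), by positivity, fun N hN l hl x => ?_⟩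
  rw [lineKernel_eq_sum hχ.continuous hχc N hl.ne', norm_mul, Complex.norm_real, Real.norm_eq_abs,
    abs_of_pos (by positivity)]
  calc 1 / (N / l) * ‖∑ n ∈ Finset.range ⌈N / l⌉₊,
        ∫ θ : ℝ, (χ ((l : ℝ) ^ 2 * θ) : ℂ) * e2pi ((x - n * l) * θ)‖
      ≤ 1 / (N / l) * ∑ n ∈ Finset.range ⌈N / l⌉₊,
          ((l : ℝ) ^ 2)⁻¹ * (A * (1 + ((x / l - n) / l) ^ 2)⁻¹) := by
        gcongr
        refine norm_sum_le_of_le _ fun n _ => ?_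
        have hscale : (x - n * l) / (l : ℝ) ^ 2 = (x / l - n) / l := by field_simp
        rw [← hscale]
        exact norm_integral_comp_mul_e2pi_le (by positivity) hdecay (x - n * l)
    _ = 1 / (N / l) * (((l : ℝ) ^ 2)⁻¹ * (A * ∑ n ∈ Finset.range ⌈N / l⌉₊,
          (1 + ((x / l - n) / l) ^ 2)⁻¹)) := by
        simp only [Finset.mul_sum]
    _ ≤ 1 / (N / l) * (((l : ℝ) ^ 2)⁻¹ * (A * (3 * Real.pi * l))) := by
        gcongr
        exact sum_inv_one_add_sq_le hl _ _
    _ = A * (3 * Real.pi) * N⁻¹ := by field_simp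

lemma arcProfile_eq_zero (hχ0 : ∀ x : ℝ, x ∉ Set.Icc (-(1/4) : ℝ) (1/4) → χ x = 0) (N : ℝ)
    {l : ℕ} (hl : 0 < l) {θ : ℝ} (hθ : 1 / (4 * (l : ℝ) ^ 2) < |θ|) : arcProfile χ N l θ = 0 := by
  rw [arcProfile, hχ0, Complex.ofReal_zero, mul_zero]
  rw [Set.mem_Icc, ← abs_le, abs_mul, abs_of_pos (by positivity), not_le]
  rw [div_lt_iff₀ (by positivity)] at hθ
  linarith

lemma intervalIntegral_arcProfile_eq_lineKernel
    (hχ0 : ∀ x : ℝ, x ∉ Set.Icc (-(1/4) : ℝ) (1/4) → χ x = 0) (N : ℝ) {l : ℕ} (hl : 0 < l)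
    {c d : ℝ} (hc : c < -(1 / (4 * (l : ℝ) ^ 2))) (hd : 1 / (4 * (l : ℝ) ^ 2) ≤ d) (x : ℝ) :
    ∫ θ in c..d, arcProfile χ N l θ * e2pi (x * θ) = lineKernel χ N l x := by
  refine intervalIntegral.integral_eq_integral_of_support_subset fun θ hθ => ?_
  have hle : |θ| ≤ 1 / (4 * (l : ℝ) ^ 2) := by
    by_contra! h
    exact left_ne_zero_of_mul hθ (arcProfile_eq_zero hχ0 N hl h)
  exact ⟨hc.trans_le (abs_le.1 hle).1, (abs_le.1 hle).2.trans hd⟩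

lemma Lker_eq_intervalIntegral (χ : ℝ → ℝ) (y : ℕ) (b : ℤ) (N : ℝ) (a q : ℕ) (x : ℤ) :
    Lker χ y b N a q x = Ups y b a q * e2pi (x * (a / q)) *
      ∫ θ in (-(a / q) : ℝ)..(1 - a / q), arcProfile χ N (Nat.lcm y q) θ * e2pi (x * θ) := by
  have hshift (ξ : ℝ) : Lhat χ y b N a q ξ * e2pi (x * ξ) = Ups y b a q * e2pi (x * (a / q)) *
      (arcProfile χ N (Nat.lcm y q) (ξ - a / q) * e2pi (x * (ξ - a / q))) := by
    rw [Lhat, arcProfile, show (x : ℝ) * ξ = x * (a / q) + x * (ξ - a / q) by ring, e2pi_add]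
    ring
  simp only [Lker, hshift]
  rw [intervalIntegral.integral_const_mul, intervalIntegral.integral_comp_sub_right
    (fun θ => arcProfile χ N (Nat.lcm y q) θ * e2pi (x * θ)), zero_sub]

lemma Lker_eq_of_one_lt (hχ0 : ∀ x : ℝ, x ∉ Set.Icc (-(1/4) : ℝ) (1/4) → χ x = 0) {y a q : ℕ}
    (hy : 0 < y) (b : ℤ) (N : ℝ) (hq : 1 < q) (ha : a ∈ coprimeResidues q) (x : ℤ) :
    Lker χ y b N a q x =
      lineKernel χ N (Nat.lcm y q) x * (Ups y b a q * e2pi (x * (a / q))) := by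
  obtain ⟨hmem, hcop⟩ := mem_coprimeResidues.1 ha
  obtain ⟨ha1, haq⟩ := Finset.mem_Icc.1 hmem
  have hlt : a < q := haq.lt_of_ne fun h => hq.ne' (by simpa [h] using hcop)
  have hlcm : 0 < Nat.lcm y q := Nat.lcm_pos hy (by omega)
  have hradius : 1 / (4 * (Nat.lcm y q : ℝ) ^ 2) < 1 / q := by
    have hql : (q : ℝ) ≤ Nat.lcm y q := by
      exact_mod_cast Nat.le_of_dvd hlcm (Nat.dvd_lcm_right y q)
    have hq1 : (1 : ℝ) < q := by exact_mod_cast hq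
    exact one_div_lt_one_div_of_lt (by linarith) (by nlinarith)
  have hleft : 1 / (q : ℝ) ≤ a / q := by gcongr; exact_mod_cast ha1
  have hright : 1 / (q : ℝ) ≤ 1 - a / q := by
    rw [le_sub_iff_add_le, ← add_div, div_le_one (by positivity)]
    exact_mod_cast (by omega : 1 + a ≤ q)
  rw [Lker_eq_intervalIntegral, intervalIntegral_arcProfile_eq_lineKernel hχ0 N hlcm
    (by linarith) (by linarith), mul_comm]

lemma Ups_one_one {y : ℕ} (hy : 0 < y) (b : ℤ) : Ups y b 1 1 = 1 := by
  have hexp : e2pi (-1) = 1 := by simpa using e2pi_intCast (-1)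
  have hφ : (Nat.totient y : ℂ) ≠ 0 := by exact_mod_cast (Nat.totient_pos.2 hy).ne'
  simp [Ups, hexp, hφ]

lemma Lker_one_one (hχ : Continuous χ)
    (hχ0 : ∀ x : ℝ, x ∉ Set.Icc (-(1/4) : ℝ) (1/4) → χ x = 0) {y : ℕ} (hy : 0 < y) (b : ℤ)
    (N : ℝ) (x : ℤ) :
    Lker χ y b N 1 1 x = lineKernel χ N y x - halfLineKernel χ N y x := by
  have hintegrable (c d : ℝ) : IntervalIntegrable (fun θ => arcProfile χ N y θ * e2pi (x * θ))
      MeasureTheory.volume c d :=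
    ((continuous_arcProfile hχ N y).mul (by fun_prop)).intervalIntegrable c d
  have hradius : 1 / (4 * (y : ℝ) ^ 2) < 1 := by
    have hy1 : (1 : ℝ) ≤ y := by exact_mod_cast hy
    rw [div_lt_one (by positivity)]
    nlinarith
  have hline := intervalIntegral_arcProfile_eq_lineKernel hχ0 N hy (c := -1) (d := 1)
    (by linarith) hradius.le x
  rw [Lker_eq_intervalIntegral, Nat.cast_one, Ups_one_one hy, Nat.cast_one, div_one, mul_one,
    e2pi_intCast, one_mul, one_mul, Nat.lcm_one_right, sub_self, ← hline, halfLineKernel,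
    eq_sub_iff_add_eq,
    intervalIntegral.integral_add_adjacent_intervals (hintegrable _ _) (hintegrable _ _)]

lemma LoK_eq (hχ : Continuous χ) (hχ0 : ∀ x : ℝ, x ∉ Set.Icc (-(1/4) : ℝ) (1/4) → χ x = 0)
    {y : ℕ} (hy : 0 < y) {b : ℤ} (hb : IsCoprime b y) (N : ℕ) (Q : ℝ) (x : ℤ) :
    LoK χ y b N Q x =
      ∑ h ∈ lowHeights y Q, lineKernel χ N (y * h) x * ((Nat.totient h : ℂ)⁻¹ *
        (ArithmeticFunction.moebius h * ramanujanSum h x) *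
        if (y : ℤ) ∣ x - b then (y : ℂ) else 0) -
      if 1 ∈ lowDenominators y Q then halfLineKernel χ N y x else 0 := by
  rw [← sum_lowDenominators_Ups_mul_e2pi hy hb Q x fun l => lineKernel χ N l x,
    ← Finset.sum_ite_eq' (lowDenominators y Q) 1 fun _ => halfLineKernel χ N y x,
    ← Finset.sum_sub_distrib]
  refine Finset.sum_congr rfl fun q hq => ?_
  obtain rfl | hq1 := eq_or_ne q 1
  · have hres : coprimeResidues 1 = {1} := rfl
    change ∑ a ∈ coprimeResidues 1, _ = _
    simp [hres, Lker_one_one hχ hχ0 hy, Ups_one_one hy, e2pi_intCast]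
  · have hq0 : 0 < q := (Finset.mem_Icc.1 (Finset.mem_filter.1 hq).1).1
    rw [if_neg hq1, sub_zero]
    exact Finset.sum_congr rfl fun a ha => Lker_eq_of_one_lt hχ0 hy b N (by omega) ha x

end ArcKernel

/-! ### The boundary arc -/

lemma norm_Mhat_le {x : ℝ} (hx : 1 ≤ x) (θ : ℝ) : ‖Mhat x θ‖ ≤ 2 := by
  have hx0 : 0 < x := by linarith
  have hsum : ‖∑ n ∈ Finset.range ⌈x⌉₊, e2pi (-(n * θ))‖ ≤ ⌈x⌉₊ := by
    simpa [norm_e2pi] using norm_sum_le (Finset.range ⌈x⌉₊) fun n : ℕ => e2pi (-(n * θ))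
  rw [Mhat, norm_mul, Complex.norm_real, Real.norm_eq_abs, abs_of_pos (by positivity),
    div_mul_eq_mul_div, div_le_iff₀ hx0]
  linarith [(Nat.ceil_lt_add_one hx0.le).le]

lemma four_mul_le_norm_one_sub_e2pi {θ : ℝ} (hθ0 : 0 ≤ θ) (hθ : θ ≤ 1 / 2) :
    4 * θ ≤ ‖1 - e2pi (-θ)‖ := by
  have hexp : e2pi (-θ) = Complex.exp (Complex.I * (-(2 * Real.pi * θ) : ℝ)) := by
    rw [e2pi]
    push_cast
    ring_nf
  have hsin := Real.mul_le_sin (x := Real.pi * θ) (by positivity) (by nlinarith [Real.pi_pos])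
  rw [norm_sub_rev, hexp, Complex.norm_exp_I_mul_ofReal_sub_one,
    show -(2 * Real.pi * θ) / 2 = -(Real.pi * θ) by ring, Real.sin_neg, mul_neg, norm_neg]
  calc 4 * θ = 2 * (2 / Real.pi * (Real.pi * θ)) := by field_simp; ring
    _ ≤ 2 * Real.sin (Real.pi * θ) := by gcongr
    _ ≤ ‖2 * Real.sin (Real.pi * θ)‖ := Real.le_norm_self _

lemma norm_Mhat_mul_le {x : ℝ} (hx : 0 < x) {θ : ℝ} (hθ0 : 0 ≤ θ) (hθ : θ ≤ 1 / 2) :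
    ‖Mhat x θ‖ * (x * θ) ≤ 1 := by
  have hpow (n : ℕ) : e2pi (-(n * θ)) = e2pi (-θ) ^ n := by
    rw [← e2pi_nat_mul, mul_neg]
  have hgeom : ‖∑ n ∈ Finset.range ⌈x⌉₊, e2pi (-(n * θ))‖ * ‖1 - e2pi (-θ)‖ ≤ 2 := by
    simp only [hpow]
    rw [← norm_mul, geom_sum_mul_neg]
    refine (norm_sub_le _ _).trans_eq ?_
    rw [norm_pow, norm_e2pi, norm_one, one_pow, one_add_one_eq_two]
  rw [Mhat, norm_mul, Complex.norm_real, Real.norm_eq_abs, abs_of_pos (by positivity)]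
  set S := ‖∑ n ∈ Finset.range ⌈x⌉₊, e2pi (-(n * θ))‖
  calc 1 / x * S * (x * θ) = S * (4 * θ) / 4 := by field_simp
    _ ≤ S * ‖1 - e2pi (-θ)‖ / 4 := by
        gcongr
        exact four_mul_le_norm_one_sub_e2pi hθ0 hθ
    _ ≤ 1 := by linarith

lemma norm_arcProfile_le {χ : ℝ → ℝ} {M : ℝ} (hM : ∀ θ, |χ θ| ≤ M)
    (hχ0 : ∀ x : ℝ, x ∉ Set.Icc (-(1/4) : ℝ) (1/4) → χ x = 0) {l : ℕ} (hl : 0 < l) {N : ℝ}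
    (hN : (l : ℝ) ≤ N) {θ : ℝ} (hθ : 0 ≤ θ) :
    ‖arcProfile χ N l θ‖ ≤ 3 * M * (1 + N * θ)⁻¹ := by
  have hl1 : (1 : ℝ) ≤ l := by exact_mod_cast hl
  have hM0 : 0 ≤ M := (abs_nonneg _).trans (hM 0)
  have hN0 : 0 < N := by linarith
  by_cases hmem : (l : ℝ) ^ 2 * θ ∈ Set.Icc (-(1/4) : ℝ) (1/4)
  · have hlθ : (l : ℝ) * θ ≤ 1 / 2 := by nlinarith [hmem.2, mul_nonneg (Nat.cast_nonneg l) hθ]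
    have hconst := norm_Mhat_le (by rwa [one_le_div (by positivity)] : (1 : ℝ) ≤ N / l) (l * θ)
    have hdecay := norm_Mhat_mul_le (x := N / l) (by positivity) (by positivity) hlθ
    rw [show N / l * (l * θ) = N * θ by field_simp] at hdecay
    rw [arcProfile, norm_mul, Complex.norm_real, Real.norm_eq_abs, ← div_eq_mul_inv,
      le_div_iff₀ (by positivity), mul_right_comm]
    exact mul_le_mul (by linarith) (hM _) (abs_nonneg _) (by norm_num)
  · rw [arcProfile, hχ0 _ hmem, Complex.ofReal_zero, mul_zero, norm_zero]
    positivity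

lemma integral_one_add_mul_rpow_neg_le {r N : ℝ} (hr : 1 < r) (hN : 0 < N) :
    ∫ θ in (0 : ℝ)..1, (1 + N * θ) ^ (-r) ≤ (r - 1)⁻¹ * N⁻¹ := by
  have : 0 < r - 1 := by linarith
  have hzero : (0 : ℝ) ∉ Set.uIcc 1 (1 + N) := by
    rw [Set.uIcc_of_le (by linarith), Set.mem_Icc]
    exact fun h => absurd h.1 (by norm_num)
  rw [intervalIntegral.integral_comp_add_mul (fun t : ℝ => t ^ (-r)) hN.ne', mul_zero, add_zero,
    mul_one, smul_eq_mul, integral_rpow (Or.inr ⟨by linarith, hzero⟩), Real.one_rpow,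
    show -r + 1 = -(r - 1) by ring, div_neg, ← neg_div, neg_sub, mul_comm]
  gcongr
  rw [div_eq_mul_inv]
  have hpos : 0 ≤ (1 + N) ^ (-(r - 1)) := by positivity
  exact mul_le_of_le_one_left (by positivity) (by linarith)

lemma integral_norm_arcProfile_rpow_le {χ : ℝ → ℝ} (hχ : Continuous χ) {M : ℝ}
    (hM : ∀ θ, |χ θ| ≤ M) (hχ0 : ∀ x : ℝ, x ∉ Set.Icc (-(1/4) : ℝ) (1/4) → χ x = 0) {l : ℕ}
    (hl : 0 < l) {N : ℝ} (hN : (l : ℝ) ≤ N) {r : ℝ} (hr : 1 < r) :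
    ∫ θ in (0 : ℝ)..1, ‖arcProfile χ N l θ‖ ^ r ≤ (3 * M) ^ r * ((r - 1)⁻¹ * N⁻¹) := by
  have hl0 : (0 : ℝ) < l := by exact_mod_cast hl
  have hN0 : 0 < N := hl0.trans_le hN
  have hM0 : 0 ≤ M := (abs_nonneg _).trans (hM 0)
  have hbase {θ : ℝ} (hθ : θ ∈ Set.Icc (0 : ℝ) 1) : 0 < 1 + N * θ := by
    have := mul_nonneg hN0.le hθ.1
    linarith
  calc ∫ θ in (0 : ℝ)..1, ‖arcProfile χ N l θ‖ ^ r
      ≤ ∫ θ in (0 : ℝ)..1, (3 * M) ^ r * (1 + N * θ) ^ (-r) := by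
        refine intervalIntegral.integral_mono_on zero_le_one ?_ ?_ fun θ hθ => ?_
        · exact ((continuous_arcProfile hχ N l).norm.rpow_const
            fun _ => Or.inr (by linarith)).intervalIntegrable _ _
        · refine ContinuousOn.intervalIntegrable_of_Icc zero_le_one (continuousOn_const.mul
            (ContinuousOn.rpow_const (by fun_prop) fun θ hθ => Or.inl (hbase hθ).ne'))
        · rw [Real.rpow_neg (hbase hθ).le, ← Real.inv_rpow (hbase hθ).le,
            ← Real.mul_rpow (by positivity) (inv_nonneg.2 (hbase hθ).le)]
          exact Real.rpow_le_rpow (norm_nonneg _) (norm_arcProfile_le hM hχ0 hl hN hθ.1)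
            (by linarith)
    _ = (3 * M) ^ r * ∫ θ in (0 : ℝ)..1, (1 + N * θ) ^ (-r) :=
        intervalIntegral.integral_const_mul _ _
    _ ≤ _ := by
        gcongr
        exact integral_one_add_mul_rpow_neg_le hr hN0

lemma integral_e2pi_intCast_mul (m : ℤ) :
    ∫ θ in (0 : ℝ)..1, e2pi (m * θ) = if m = 0 then 1 else 0 := by
  have hexp (θ : ℝ) : e2pi (m * θ) = Complex.exp (2 * Real.pi * Complex.I * m * θ) := by
    rw [e2pi]
    push_cast
    ring_nf
  split_ifs with hm
  · simp [hm, e2pi_zero]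
  · have hne : (2 * Real.pi * Complex.I * m : ℂ) ≠ 0 :=
      mul_ne_zero Complex.two_pi_I_ne_zero (by exact_mod_cast hm)
    simp only [hexp]
    rw [integral_exp_mul_complex hne, ← hexp, ← hexp, mul_one, mul_zero, e2pi_intCast, e2pi_zero,
      sub_self, zero_div]

lemma conj_e2pi (t : ℝ) : starRingEnd ℂ (e2pi t) = e2pi (-t) := by
  rw [e2pi, e2pi, ← Complex.exp_conj]
  simp [Complex.conj_ofNat]

lemma integral_norm_sum_e2pi_sq (G : Finset ℤ) :
    ∫ θ in (0 : ℝ)..1, ‖∑ m ∈ G, e2pi (m * θ)‖ ^ 2 = G.card := by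
  have hexpand (θ : ℝ) : ((‖∑ m ∈ G, e2pi (m * θ)‖ ^ 2 : ℝ) : ℂ) =
      ∑ m ∈ G, ∑ n ∈ G, e2pi ((m - n : ℤ) * θ) := by
    push_cast
    rw [← Complex.mul_conj', map_sum, Finset.sum_mul_sum]
    refine Finset.sum_congr rfl fun m _ => Finset.sum_congr rfl fun n _ => ?_
    rw [conj_e2pi, ← e2pi_add]
    ring_nf
  suffices h : ((∫ θ in (0 : ℝ)..1, ‖∑ m ∈ G, e2pi (m * θ)‖ ^ 2 : ℝ) : ℂ) = G.card by
    exact_mod_cast h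
  rw [← intervalIntegral.integral_ofReal]
  simp only [hexpand]
  rw [intervalIntegral.integral_finsetSum fun m _ =>
    Continuous.intervalIntegrable (by fun_prop) _ _, Finset.card_eq_sum_ones, Nat.cast_sum]
  refine Finset.sum_congr rfl fun m hm => ?_
  rw [intervalIntegral.integral_finsetSum fun n _ =>
    Continuous.intervalIntegrable (by fun_prop) _ _]
  simp only [integral_e2pi_intCast_mul, sub_eq_zero]
  rw [Finset.sum_ite_eq, if_pos hm, Nat.cast_one]

lemma integral_norm_sum_e2pi_rpow_le (G : Finset ℤ) {q : ℝ} (hq : 2 ≤ q) :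
    ∫ θ in (0 : ℝ)..1, ‖∑ m ∈ G, e2pi (m * θ)‖ ^ q ≤ (G.card : ℝ) ^ (q - 1) := by
  have hcont : Continuous fun θ : ℝ => ∑ m ∈ G, e2pi (m * θ) := by fun_prop
  have hle (θ : ℝ) : ‖∑ m ∈ G, e2pi (m * θ)‖ ≤ G.card := by
    simpa [norm_e2pi] using norm_sum_le G fun m => e2pi (m * θ)
  calc ∫ θ in (0 : ℝ)..1, ‖∑ m ∈ G, e2pi (m * θ)‖ ^ q
      ≤ ∫ θ in (0 : ℝ)..1, (G.card : ℝ) ^ (q - 2) * ‖∑ m ∈ G, e2pi (m * θ)‖ ^ 2 := by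
        refine intervalIntegral.integral_mono_on zero_le_one ?_ ?_ fun θ _ => ?_
        · exact (hcont.norm.rpow_const fun _ => Or.inr (by linarith)).intervalIntegrable _ _
        · exact (continuous_const.mul (hcont.norm.pow 2)).intervalIntegrable _ _
        · rw [← Real.rpow_natCast, show q = (q - 2) + (2 : ℕ) by push_cast; ring,
            Real.rpow_add_of_nonneg (norm_nonneg _) (by linarith) (by norm_num),
            ← show q = (q - 2) + (2 : ℕ) by push_cast; ring]
          gcongr
          exact hle θ
    _ = (G.card : ℝ) ^ (q - 1) := by
        rw [intervalIntegral.integral_const_mul, integral_norm_sum_e2pi_sq,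
          ← Real.rpow_add_one' (Nat.cast_nonneg _) (by linarith)]
        ring_nf

lemma norm_integral_mul_le_Lp_mul_Lq {p q : ℝ} (hpq : p.HolderConjugate q) {f g : ℝ → ℂ}
    (hf : Continuous f) (hg : Continuous g) :
    ‖∫ θ in (0 : ℝ)..1, f θ * g θ‖ ≤
      (∫ θ in (0 : ℝ)..1, ‖f θ‖ ^ p) ^ (1 / p) * (∫ θ in (0 : ℝ)..1, ‖g θ‖ ^ q) ^ (1 / q) := by
  have hmem {f : ℝ → ℂ} (hf : Continuous f) (s : ℝ) : MeasureTheory.MemLp f (ENNReal.ofReal s)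
      (MeasureTheory.volume.restrict (Set.Ioc 0 1)) := by
    obtain ⟨B, hB⟩ := isCompact_Icc.exists_bound_of_continuousOn hf.continuousOn
    refine .of_bound hf.aestronglyMeasurable B ?_
    filter_upwards [MeasureTheory.ae_restrict_mem measurableSet_Ioc] with θ hθ
    exact hB θ (Set.Ioc_subset_Icc_self hθ)
  simp only [intervalIntegral.integral_of_le zero_le_one]
  refine (MeasureTheory.norm_integral_le_integral_norm _).trans ?_
  simp only [norm_mul]
  exact MeasureTheory.integral_mul_norm_le_Lp_mul_Lq hpq (hmem hf p) (hmem hg q)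

lemma norm_sum_integral_mul_e2pi_le {r : ℝ} (hr : 1 < r) (hr2 : r ≤ 2) {k : ℝ → ℂ}
    (hk : Continuous k) (G : Finset ℤ) :
    ‖∑ m ∈ G, ∫ θ in (0 : ℝ)..1, k θ * e2pi (m * θ)‖ ≤
      (∫ θ in (0 : ℝ)..1, ‖k θ‖ ^ r) ^ (1 / r) * (G.card : ℝ) ^ (1 / r) := by
  have hpq : r.HolderConjugate (r / (r - 1)) := .conjExponent hr
  have hq : 2 ≤ r / (r - 1) := by
    rw [le_div_iff₀ (by linarith)]
    linarith
  have hexponent : (r / (r - 1) - 1) * (1 / (r / (r - 1))) = 1 / r := by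
    have : r - 1 ≠ 0 := by linarith
    field_simp
    ring
  rw [← intervalIntegral.integral_finsetSum fun m _ =>
    Continuous.intervalIntegrable (by fun_prop) _ _]
  simp only [← Finset.mul_sum]
  refine (norm_integral_mul_le_Lp_mul_Lq hpq hk (by fun_prop)).trans ?_
  have hpos : 0 ≤ ∫ θ in (0 : ℝ)..1, ‖k θ‖ ^ r :=
    intervalIntegral.integral_nonneg zero_le_one fun θ _ => by positivity
  rw [← hexponent, Real.rpow_mul (Nat.cast_nonneg _), hexponent]
  gcongr
  · exact intervalIntegral.integral_nonneg zero_le_one fun θ _ => by positivity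
  · exact integral_norm_sum_e2pi_rpow_le G hq

lemma exists_norm_sum_halfLineKernel_le_of_le_two {χ : ℝ → ℝ} (hχ : Continuous χ)
    (hχ0 : ∀ x : ℝ, x ∉ Set.Icc (-(1/4) : ℝ) (1/4) → χ x = 0) {r : ℝ} (hr : 1 < r)
    (hr2 : r ≤ 2) :
    ∃ C : ℝ, 0 < C ∧ ∀ (y : ℕ) (N : ℝ), 0 < y → y ≤ N → ∀ (x : ℤ) (F : Finset ℤ),
      ‖∑ z ∈ F, halfLineKernel χ N y (x - z : ℤ)‖ ≤ C * (N⁻¹ * F.card) ^ (1 / r) := by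
  obtain ⟨M, hM⟩ := (HasCompactSupport.intro isCompact_Icc hχ0).exists_bound_of_continuous hχ
  have : 0 < r - 1 := by linarith
  refine ⟨((3 * max M 1) ^ r * (r - 1)⁻¹) ^ (1 / r), by positivity, fun y N hy hN x F => ?_⟩
  have hN0 : 0 < N := (Nat.cast_pos.2 hy).trans_le hN
  have hreindex : ∑ z ∈ F, halfLineKernel χ N y (x - z : ℤ) = ∑ m ∈ F.image (x - ·),
      ∫ θ in (0 : ℝ)..1, arcProfile χ N y θ * e2pi (m * θ) := by
    rw [Finset.sum_image sub_right_injective.injOn]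
    rfl
  have hcard : (F.image (x - ·)).card = F.card :=
    Finset.card_image_of_injective _ sub_right_injective
  have hpos : 0 ≤ ∫ θ in (0 : ℝ)..1, ‖arcProfile χ N y θ‖ ^ r :=
    intervalIntegral.integral_nonneg zero_le_one fun θ _ => by positivity
  rw [hreindex, ← hcard]
  refine (norm_sum_integral_mul_e2pi_le hr hr2 (continuous_arcProfile hχ N y) _).trans ?_
  rw [← Real.mul_rpow hpos (by positivity), ← Real.mul_rpow (by positivity) (by positivity),
    ← mul_assoc, mul_assoc ((3 * max M 1) ^ r)]
  gcongr
  exact integral_norm_arcProfile_rpow_le hχ (fun θ => (hM θ).trans (le_max_left _ _)) hχ0 hy hN hr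

lemma rpow_le_two_mul_rpow {t ρ σ : ℝ} (ht0 : 0 ≤ t) (ht : t ≤ 2) (hρ : 0 ≤ ρ) (hρσ : ρ ≤ σ)
    (hσ : σ ≤ 1) : t ^ σ ≤ 2 * t ^ ρ := by
  have hsub : t ^ (σ - ρ) ≤ 2 :=
    calc t ^ (σ - ρ) ≤ 2 ^ (σ - ρ) := Real.rpow_le_rpow ht0 ht (by linarith)
      _ ≤ 2 ^ (1 : ℝ) := Real.rpow_le_rpow_of_exponent_le one_le_two (by linarith)
      _ = 2 := Real.rpow_one 2
  rw [← sub_add_cancel σ ρ, Real.rpow_add_of_nonneg ht0 (by linarith) hρ]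
  gcongr

lemma card_le_two_mul_of_subset_Icc {N : ℕ} (hN : 0 < N) {F : Finset ℤ}
    (hF : ∀ z ∈ F, z ∈ Set.Icc (0 : ℤ) N) : F.card ≤ 2 * N := by
  have hcard := Finset.card_le_card fun z hz => Finset.mem_Icc.2 (hF z hz)
  rw [Int.card_Icc] at hcard
  omega

lemma exists_norm_sum_halfLineKernel_le {χ : ℝ → ℝ} (hχ : Continuous χ)
    (hχ0 : ∀ x : ℝ, x ∉ Set.Icc (-(1/4) : ℝ) (1/4) → χ x = 0) {r : ℝ} (hr : 1 < r) :
    ∃ C : ℝ, 0 < C ∧ ∀ y N : ℕ, 0 < y → y ≤ N → ∀ (x : ℤ) (F : Finset ℤ),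
      (∀ z ∈ F, z ∈ Set.Icc (0 : ℤ) N) →
        ‖∑ z ∈ F, halfLineKernel χ N y (x - z : ℤ)‖ ≤ C * ((y : ℝ) / N * F.card) ^ (1 / r) := by
  have hs : 1 < min r 2 := lt_min hr one_lt_two
  obtain ⟨C, hC, hbound⟩ :=
    exists_norm_sum_halfLineKernel_le_of_le_two hχ hχ0 hs (min_le_right r 2)
  refine ⟨C * 2, by positivity, fun y N hy hyN x F hF => ?_⟩
  have hN : (0 : ℝ) < N := by exact_mod_cast hy.trans_le hyN
  have hdensity : (N : ℝ)⁻¹ * F.card ≤ 2 := by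
    rw [inv_mul_le_iff₀ hN, mul_comm]
    exact_mod_cast card_le_two_mul_of_subset_Icc (hy.trans_le hyN) hF
  have hle : (N : ℝ)⁻¹ * F.card ≤ (y : ℝ) / N * F.card := by
    rw [inv_eq_one_div]
    gcongr
    exact_mod_cast hy
  calc _ ≤ C * ((N : ℝ)⁻¹ * F.card) ^ (1 / min r 2) := hbound y N hy (by exact_mod_cast hyN) x F
    _ ≤ C * (2 * ((N : ℝ)⁻¹ * F.card) ^ (1 / r)) := by
        gcongr
        exact rpow_le_two_mul_rpow (by positivity) hdensity (by positivity)
          (one_div_le_one_div_of_le (by linarith) (min_le_left r 2))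
          ((div_le_one (by linarith)).2 hs.le)
    _ ≤ C * 2 * ((y : ℝ) / N * F.card) ^ (1 / r) := by
        rw [mul_assoc]
        gcongr

/-! ### The low term -/

lemma norm_sum_lineKernel_mul_le {χ : ℝ → ℝ} {N A : ℝ} {y : ℕ} (hy : 0 < y) (hA : 0 ≤ A)
    (hN : 0 < N) (hK : ∀ l : ℕ, 0 < l → ∀ x : ℝ, ‖lineKernel χ N l x‖ ≤ A * N⁻¹) (b x : ℤ)
    (Q : ℝ) (F : Finset ℤ) :
    ‖∑ z ∈ F, ∑ h ∈ lowHeights y Q, lineKernel χ N (y * h) (x - z : ℤ) *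
        ((Nat.totient h : ℂ)⁻¹ * (ArithmeticFunction.moebius h * ramanujanSum h (x - z)) *
          if (y : ℤ) ∣ x - z - b then (y : ℂ) else 0)‖ ≤
      A * ((y : ℝ) / N * ∑ z ∈ F with (y : ℤ) ∣ x - z - b,
        ∑ h ∈ lowHeights y Q, (Nat.totient h : ℝ)⁻¹ * ‖ramanujanSum h (x - z)‖) := by
  rw [Finset.sum_filter, Finset.mul_sum, Finset.mul_sum]
  refine norm_sum_le_of_le _ fun z _ => ?_
  split_ifs
  · rw [Finset.mul_sum, Finset.mul_sum]
    refine norm_sum_le_of_le _ fun h hh => ?_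
    have hμ : ‖((ArithmeticFunction.moebius h : ℤ) : ℂ)‖ ≤ 1 := by
      rw [Complex.norm_intCast]
      exact_mod_cast ArithmeticFunction.abs_moebius_le_one
    simp only [norm_mul, norm_inv, Complex.norm_natCast]
    calc _ ≤ A * N⁻¹ * ((Nat.totient h : ℝ)⁻¹ * (1 * ‖ramanujanSum h (x - z)‖) * (y : ℝ)) := by
          gcongr
          exact hK (y * h) (Nat.mul_pos hy (mem_lowHeights.1 hh).1) _
      _ = _ := by ring
  · simp

lemma exists_norm_sum_lineKernel_mul_le {χ : ℝ → ℝ} (hχ : ContDiff ℝ (⊤ : ℕ∞) χ)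
    (hχc : HasCompactSupport χ) {ε ρ : ℝ} (hε : 0 < ε) (hρ : 0 ≤ ρ) {k : ℕ}
    (hρk : ρ * (k + 1) ≤ k) :
    ∃ C : ℝ, 0 < C ∧ ∀ (y N : ℕ) (Q : ℝ), 0 < y → 1 ≤ Q → (y : ℝ) * Q ^ (k + 1) ≤ N →
      ∀ (b x : ℤ) (F : Finset ℤ), (∀ z ∈ F, z ∈ Set.Icc (0 : ℤ) N) →
        ‖∑ z ∈ F, ∑ h ∈ lowHeights y Q, lineKernel χ N (y * h) (x - z : ℤ) *
            ((Nat.totient h : ℂ)⁻¹ * (ArithmeticFunction.moebius h * ramanujanSum h (x - z)) *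
              if (y : ℤ) ∣ x - z - b then (y : ℂ) else 0)‖ ≤
          C * Q ^ ε * ((y : ℝ) / N * F.card) ^ ρ := by
  obtain ⟨A, hA, hkernel⟩ := exists_norm_lineKernel_le hχ hχc
  obtain ⟨c, hc, hmoment⟩ := exists_sum_ramanujanSum_le hε hρ hρk
  refine ⟨A * c, by positivity, fun y N Q hy hQ hyQN b x F hF => ?_⟩
  have hN : (0 : ℝ) < N := (by positivity : 0 < (y : ℝ) * Q ^ (k + 1)).trans_le hyQN
  refine (norm_sum_lineKernel_mul_le hy hA.le hN (hkernel N hN) b x Q F).trans ?_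
  rw [mul_assoc A c, mul_assoc A]
  exact mul_le_mul_of_nonneg_left (hmoment y N Q hy hQ hyQN b x F hF) hA.le

lemma exists_norm_LoConv_le {χ : ℝ → ℝ} (hχ : ContDiff ℝ (⊤ : ℕ∞) χ)
    (hχ0 : ∀ x : ℝ, x ∉ Set.Icc (-(1/4) : ℝ) (1/4) → χ x = 0) {ε r : ℝ} (hε : 0 < ε)
    (hr : 1 < r) :
    ∃ C : ℝ, 0 < C ∧ ∃ K : ℕ, ∀ y N : ℕ, 0 < y → ∀ b : ℤ, IsCoprime b y →
      ∀ Q : ℝ, 1 ≤ Q → (y : ℝ) * Q ^ K ≤ N →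
        ∀ F : Finset ℤ, (∀ z ∈ F, z ∈ Set.Icc (0 : ℤ) N) → ∀ x : ℤ,
          ‖LoConv χ y b N Q F x‖ ≤ C * Q ^ ε * ((y : ℝ) / N * F.card) ^ (1 / r) := by
  have hr0 : 0 < r - 1 := by linarith
  obtain ⟨k, hk⟩ := exists_nat_ge (1 / (r - 1))
  have hρk : 1 / r * (k + 1) ≤ k := by
    rw [div_le_iff₀ hr0] at hk
    rw [div_mul_eq_mul_div, div_le_iff₀ (by linarith)]
    linarith
  obtain ⟨A, hA, hline⟩ := exists_norm_sum_lineKernel_mul_le hχ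
    (HasCompactSupport.intro isCompact_Icc hχ0) hε (by positivity) hρk
  obtain ⟨B, hB, hhalf⟩ := exists_norm_sum_halfLineKernel_le hχ.continuous hχ0 hr
  refine ⟨A + B, by positivity, k + 1, fun y N hy b hb Q hQ hyQN F hF x => ?_⟩
  have hyN : y ≤ N := by
    exact_mod_cast (le_mul_of_one_le_right (Nat.cast_nonneg y) (one_le_pow₀ hQ)).trans hyQN
  have hboundary : ‖∑ z ∈ F, if 1 ∈ lowDenominators y Q then halfLineKernel χ N y (x - z : ℤ)
      else 0‖ ≤ B * Q ^ ε * ((y : ℝ) / N * F.card) ^ (1 / r) := by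
    split_ifs
    · refine (hhalf y N hy hyN x F hF).trans ?_
      gcongr
      exact le_mul_of_one_le_right hB.le (Real.one_le_rpow hQ hε.le)
    · rw [Finset.sum_const_zero, norm_zero]
      positivity
  simp only [LoConv, LoK_eq hχ.continuous hχ0 hy hb]
  rw [Finset.sum_sub_distrib, add_mul, add_mul]
  exact (norm_sub_le _ _).trans (add_le_add (hline y N Q hy hQ hyQN b x F hF) hboundary)

theorem low_term_fixed_scale_general {χ : ℝ → ℝ} (hχs : ContDiff ℝ (⊤ : ℕ∞) χ)
    (hχ0 : ∀ x : ℝ, x ∉ Set.Icc (-(1/4) : ℝ) (1/4) → χ x = 0) {ε r : ℝ} (hε : 0 < ε)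
    (hr : 1 < r) :
    ∃ C : ℝ, 0 < C ∧ ∃ K : ℕ, ∀ y : ℕ, 1 ≤ y → ∀ N : ℕ, ∀ b : ℤ, Int.gcd b y = 1 →
      ∀ Q : ℝ, 1 ≤ Q → (y : ℝ) * Q ^ K ≤ N →
        ∀ F : Finset ℤ, (∀ x ∈ F, x ∈ Set.Icc (0 : ℤ) (N : ℤ)) →
          (⨆ x : ℤ, (‖LoConv χ y b N Q F x‖₊ : ℝ≥0∞)) ≤
            ENNReal.ofReal
              (C * Q ^ ε * ((y : ℝ) / (N : ℝ)) ^ (1 / r) * (F.card : ℝ) ^ (1 / r)) := by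
  obtain ⟨C, hC, K, hbound⟩ := exists_norm_LoConv_le hχs hχ0 hε hr
  refine ⟨C, hC, K, fun y hy N b hb Q hQ hyQN F hF => iSup_le fun x => ?_⟩
  rw [← enorm_eq_nnnorm, ← ofReal_norm, mul_assoc _ (_ ^ (1 / r)),
    ← Real.mul_rpow (by positivity) (by positivity)]
  exact ENNReal.ofReal_le_ofReal
    (hbound y N hy b (Int.isCoprime_iff_gcd_eq_one.2 hb) Q hQ hyQN F hF x)

lemma eventually_mul_pow_le_of_lt_log_rpow {c : ℝ} (hc : 0 ≤ c) (s : ℝ) (K : ℕ) :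
    ∀ᶠ N : ℕ in Filter.atTop, ∀ Q : ℝ, 0 ≤ Q → Q < Real.log N ^ s → c * Q ^ K ≤ N := by
  have hlittle : (fun N : ℝ => c * Real.log N ^ (s * K)) =o[Filter.atTop] fun N => N ^ (1 : ℝ) :=
    (isLittleO_log_rpow_rpow_atTop _ one_pos).const_mul_left c
  filter_upwards [tendsto_natCast_atTop_atTop.eventually (hlittle.bound one_pos)]
    with N hbound Q hQ hQN
  rw [one_mul, Real.rpow_one, Real.norm_natCast, Real.rpow_mul (Real.log_natCast_nonneg N),
    Real.rpow_natCast] at hbound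
  calc c * Q ^ K ≤ c * (Real.log N ^ s) ^ K := by gcongr
    _ ≤ N := (Real.le_norm_self _).trans hbound

theorem low_term_fixed_scale (χ : ℝ → ℝ) (hχs : ContDiff ℝ (⊤ : ℕ∞) χ)
    (hχr : ∀ x : ℝ, χ x ∈ Set.Icc (0 : ℝ) 1)
    (hχ1 : ∀ x ∈ Set.Icc (-(1/16) : ℝ) (1/16), χ x = 1)
    (hχ0 : ∀ x : ℝ, x ∉ Set.Icc (-(1/4) : ℝ) (1/4) → χ x = 0) :
    ∀ ε : ℝ, 0 < ε → ∀ r : ℝ, 1 < r → r < 2 →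
      ∃ C C' : ℝ, 0 < C ∧ 0 < C' ∧
        ∀ y : ℕ, 1 ≤ y →
          ∃ N0 : ℕ,
            ∀ N : ℕ, N0 < N → ∀ b : ℤ, Int.gcd b y = 1 →
              ∀ Q : ℝ, 1 ≤ Q → Q < Real.log N ^ (C' * (r / (r - 1))) →
                ∀ F : Finset ℤ, (∀ x ∈ F, x ∈ Set.Icc (0 : ℤ) (N : ℤ)) →
                  (⨆ x : ℤ, (‖LoConv χ y b N Q F x‖₊ : ℝ≥0∞)) ≤
                    ENNReal.ofReal
                      (C * Q ^ ε * ((y : ℝ) / (N : ℝ)) ^ (1 / r) *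
                        (F.card : ℝ) ^ (1 / r)) := by
  intro ε hε r hr _
  obtain ⟨C, hC, K, hbound⟩ := low_term_fixed_scale_general hχs hχ0 hε hr
  refine ⟨C, 1, hC, one_pos, fun y hy => ?_⟩
  obtain ⟨N0, hN0⟩ := Filter.eventually_atTop.1
    (eventually_mul_pow_le_of_lt_log_rpow (Nat.cast_nonneg y) (1 * (r / (r - 1))) K)
  exact ⟨N0, fun N hN b hb Q hQ1 hQ =>
    hbound y hy N b hb Q hQ1 (hN0 N hN.le Q (by linarith) hQ)⟩

end
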